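/- (Schlage-Puchta) Assume the Riemann Hypothesis. Then for every real T > 2, the number of sign changes of π(x) − Li(x) on (2, T) exceeds log(T)/e^{e^{16.7}} − 1: for any natural number N with N ≤ log(T)/e^{e^{16.7}} − 1, there exist points x₀ < x₁ < ⋯ < x_N in (2, T) with (π(x_i) − Li(x_i))·(π(x_{i+1}) − Li(x_{i+1})) < 0 for all 0 ≤ i < N. -/

import Mathlib

/-!
Partial summation expresses `(π(x) - Li(x)) log x` as `θ(x) - x + O(√x / log x)`, and the squares
of primes make `θ` smaller than `ψ` by about `√x`. Hence, for large `x`, `π(x) - Li(x)` is negative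
if `ψ(x) - x < 0.68 √x` and positive if `ψ(x) - x > 1.4 √x`.

Under the Riemann Hypothesis the explicit formula gives the weighted integral of `ψ(t) - t` against
`t ^ m` up to `x` as `-∑ x ^ (ρ + m + 1) / (ρ (ρ + m + 1))` up to `O(x ^ (m + 1))`, and this sum
converges absolutely. For `m = 0` it is too small in absolute value for `ψ(t) - t` to stay above
`0.68 √t` on `[x / 4, x]`, so `π - Li` is negative somewhere in this interval, for every large `x`.
For `m = 998` the weight sits close to `x`, and if `x ^ (I γ)` is close to `1` for all zeros
`1 / 2 + I γ` of height at most `50000`, the sum is close to its value without these factors, which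
is real, positive and large: `ψ(t) - t` has to exceed `1.4 √t` somewhere in `[x / 4, x]`, and there
`π - Li` is positive.

There are at most `460000` such zeros, so the box principle provides the required points
`x = exp (10 ^ 8 k)` with positive density in `k`, at least one in every `(10 ^ 5) ^ 460000`
consecutive `k` on average. Choosing the signs alternately in successive intervals `[x / 4, x]`
gives the sign changes.
-/

open Real Filter Set

/-- `Li(x) = ∫₂ˣ dt/log t`. -/
noncomputable def Li (x : ℝ) : ℝ := ∫ t in (2:ℝ)..x, 1 / Real.log t

/-- `π(x)`: the number of primes `p ≤ x`. -/
noncomputable def primePi (x : ℝ) : ℕ := Nat.card {p : ℕ | p.Prime ∧ (p : ℝ) ≤ x}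

namespace SchlagePuchta

section Hadamard

open Metric Topology

variable {f g : ℂ → ℂ}

lemma exists_eq_sub_pow_mul (hg : Differentiable ℂ g) {ρ : ℂ} {n : ℕ}
    (hn : analyticOrderAt g ρ = n) :
    ∃ h : ℂ → ℂ, Differentiable ℂ h ∧ h ρ ≠ 0 ∧ ∀ z, g z = (z - ρ) ^ n * h z := by
  obtain ⟨k, hk, hkρ, hgk⟩ := (hg.analyticAt ρ).analyticOrderAt_eq_natCast.mp hn
  set h : ℂ → ℂ := Function.update (fun z ↦ g z / (z - ρ) ^ n) ρ (k ρ) with h_def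
  have h_self : h ρ = k ρ := by simp [h_def]
  have h_of_ne : ∀ z ≠ ρ, h z = g z / (z - ρ) ^ n := fun z hz ↦ by simp [h_def, hz]
  have pow_ne : ∀ z ≠ ρ, (z - ρ) ^ n ≠ 0 := fun z hz ↦ pow_ne_zero n (sub_ne_zero.mpr hz)
  have hhk : h =ᶠ[𝓝 ρ] k := by
    filter_upwards [hgk] with z hz
    rcases eq_or_ne z ρ with rfl | hzρ
    · exact h_self
    · rw [h_of_ne z hzρ, hz, smul_eq_mul, mul_div_cancel_left₀ _ (pow_ne z hzρ)]
  refine ⟨h, fun z ↦ ?_, h_self ▸ hkρ, fun z ↦ ?_⟩ <;> rcases eq_or_ne z ρ with rfl | hzρ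
  · exact hk.differentiableAt.congr_of_eventuallyEq hhk
  · refine DifferentiableAt.congr_of_eventuallyEq
      (f := fun z ↦ g z / (z - ρ) ^ n) (by fun_prop (disch := exact pow_ne z hzρ)) ?_
    filter_upwards [isOpen_ne.mem_nhds hzρ] with w hw using h_of_ne w hw
  · rw [h_self, ← smul_eq_mul]
    exact hgk.self_of_nhds
  · rw [h_of_ne z hzρ, mul_div_cancel₀ _ (pow_ne z hzρ)]

lemma analyticOrderAt_ne_top_of_differentiable (hf : Differentiable ℂ f) (h0 : f 0 ≠ 0) (ρ : ℂ) :
    analyticOrderAt f ρ ≠ ⊤ := by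
  refine AnalyticOnNhd.analyticOrderAt_ne_top_of_isPreconnected (fun z _ ↦ hf.analyticAt z)
    (x := 0) isPreconnected_univ (mem_univ _) (mem_univ _) ?_
  rw [(hf.analyticAt 0).analyticOrderAt_eq_zero.mpr h0]
  exact ENat.zero_ne_top

lemma exists_eq_prod_one_sub_div_pow_mul (hf : Differentiable ℂ f) (h0 : f 0 ≠ 0) (S : Finset ℂ)
    (hS : ∀ ρ ∈ S, f ρ = 0) :
    ∃ g : ℂ → ℂ, Differentiable ℂ g ∧ (∀ ρ ∈ S, g ρ ≠ 0) ∧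
      ∀ z, f z = (∏ ρ ∈ S, (1 - z / ρ) ^ analyticOrderNatAt f ρ) * g z := by
  classical
  induction S using Finset.induction_on with
  | empty => exact ⟨f, hf, by simp, by simp⟩
  | insert ρ S hρ ih =>
    obtain ⟨g, hg, hgS, hfg⟩ := ih fun r hr ↦ hS r (Finset.mem_insert_of_mem hr)
    have ne_zero : ∀ r ∈ insert ρ S, r ≠ 0 := fun r hr h ↦ h0 (h ▸ hS r hr)
    have hρ0 : ρ ≠ 0 := ne_zero ρ (Finset.mem_insert_self _ _)
    set P : ℂ → ℂ := fun z ↦ ∏ r ∈ S, (1 - z / r) ^ analyticOrderNatAt f r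
    have hPd : Differentiable ℂ P := by fun_prop
    have hPρ : P ρ ≠ 0 := by
      refine Finset.prod_ne_zero_iff.mpr fun r hr ↦ pow_ne_zero _ fun h ↦ hρ ?_
      rwa [(div_eq_one_iff_eq (ne_zero r (Finset.mem_insert_of_mem hr))).mp (sub_eq_zero.mp h).symm]
    have hord : analyticOrderAt g ρ = analyticOrderNatAt f ρ := by
      have hfPg : f = P * g := funext hfg
      rw [Nat.cast_analyticOrderNatAt (analyticOrderAt_ne_top_of_differentiable hf h0 ρ), hfPg,
        analyticOrderAt_mul (hPd.analyticAt ρ) (hg.analyticAt ρ),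
        (hPd.analyticAt ρ).analyticOrderAt_eq_zero.mpr hPρ, zero_add]
    obtain ⟨h, hh, hhρ, hgh⟩ := exists_eq_sub_pow_mul hg hord
    set n := analyticOrderNatAt f ρ
    refine ⟨fun z ↦ (-ρ) ^ n * h z, by fun_prop, fun r hr ↦ ?_, fun z ↦ ?_⟩
    · refine mul_ne_zero (pow_ne_zero _ (neg_ne_zero.mpr hρ0)) ?_
      rcases Finset.mem_insert.mp hr with rfl | hr
      · exact hhρ
      · exact fun h' ↦ hgS r hr (by rw [hgh, h', mul_zero])
    · have hfactor : (z - ρ) ^ n = (1 - z / ρ) ^ n * (-ρ) ^ n := by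
        rw [← mul_pow]
        congr 1
        field_simp
        ring
      rw [Finset.prod_insert hρ, hfg z, hgh z, hfactor]
      ring

lemma finite_zeros_norm_le (hf : Differentiable ℂ f) (h0 : f 0 ≠ 0) (R : ℝ) :
    {ρ : ℂ | f ρ = 0 ∧ ‖ρ‖ ≤ R}.Finite := by
  obtain ⟨hclosed, hdiscrete⟩ := mem_codiscrete'.mp
    (AnalyticOnNhd.preimage_zero_mem_codiscrete (fun z _ ↦ hf.analyticAt z) h0)
  rw [preimage_compl, isOpen_compl_iff] at hclosed
  rw [preimage_compl, compl_compl] at hdiscrete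
  refine (((isCompact_closedBall (0 : ℂ) R).inter_right hclosed).finite
    (hdiscrete.mono inter_subset_right)).subset fun z hz ↦ ?_
  simpa using hz.symm

open Classical in
/-- The zeros of `f` in the closed disc of radius `R` about `0`, over which Hadamard's sums are
taken. The value is `∅` if there are infinitely many of them. -/
noncomputable def zerosInDisc (f : ℂ → ℂ) (R : ℝ) : Finset ℂ :=
  if h : {ρ : ℂ | f ρ = 0 ∧ ‖ρ‖ ≤ R}.Finite then h.toFinset else ∅

lemma mem_zerosInDisc (hf : Differentiable ℂ f) (h0 : f 0 ≠ 0) {R : ℝ} {ρ : ℂ} :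
    ρ ∈ zerosInDisc f R ↔ f ρ = 0 ∧ ‖ρ‖ ≤ R := by
  rw [zerosInDisc, dif_pos (finite_zeros_norm_le hf h0 R), Finite.mem_toFinset, mem_ofPred]

lemma exists_log_on_ball {R : ℝ} (hR : 0 < R) (hg : DifferentiableOn ℂ g (ball 0 R))
    (hg0 : ∀ z ∈ ball (0 : ℂ) R, g z ≠ 0) :
    ∃ L : ℂ → ℂ, L 0 = 0 ∧ (∀ z ∈ ball (0 : ℂ) R, HasDerivAt L (logDeriv g z) z) ∧
      ∀ z ∈ ball (0 : ℂ) R, g z = g 0 * Complex.exp (L z) := by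
  have hlog : DifferentiableOn ℂ (logDeriv g) (ball 0 R) :=
    (hg.deriv isOpen_ball).div hg hg0
  obtain ⟨L, hL0, hL⟩ := hlog.isExactOn_ball.with_val_at 0 0
  refine ⟨L, hL0, hL, fun z hz ↦ ?_⟩
  have hexp : EqOn (logDeriv g) (logDeriv fun z ↦ Complex.exp (L z)) (ball 0 R) := fun y hy ↦ by
    rw [logDeriv_apply (fun z ↦ Complex.exp (L z)), (hL y hy).cexp.deriv,
      mul_div_cancel_left₀ _ (Complex.exp_ne_zero _)]
  obtain ⟨c, -, hc⟩ := (logDeriv_eqOn_iff hg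
    (fun y hy ↦ (hL y hy).cexp.differentiableAt.differentiableWithinAt) isOpen_ball
    (convex_ball _ _).isPreconnected (fun y _ ↦ Complex.exp_ne_zero _) hg0).mp hexp
  have hc0 := hc (mem_ball_self hR)
  have hcz := hc hz
  simp only [Pi.smul_apply, smul_eq_mul, hL0, Complex.exp_zero, mul_one] at hc0 hcz
  rw [hcz, hc0]

lemma norm_deriv_le_of_norm_le {r s C : ℝ} (hr : 0 < r) {F : ℂ → ℂ}
    (hF : DifferentiableOn ℂ F (ball 0 (s + 2 * r))) (hC : ∀ z, ‖z‖ ≤ s + r → ‖F z‖ ≤ C) {z : ℂ}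
    (hz : ‖z‖ ≤ s) : ‖deriv F z‖ ≤ C / r := by
  have hsub : closedBall z r ⊆ closedBall 0 (s + r) :=
    closedBall_subset_closedBall' (by rw [dist_zero_right]; linarith)
  refine Complex.norm_deriv_le_of_forall_mem_sphere_norm_le hr
    (hF.diffContOnCl_ball (hsub.trans (closedBall_subset_ball (by linarith)))) fun y hy ↦ hC y ?_
  simpa using hsub (sphere_subset_closedBall hy)

/-- Borel–Carathéodory bounds a logarithm of `g`; two Cauchy estimates pass to the derivative of
its logarithmic derivative. -/
lemma norm_logDeriv_sub_logDeriv_le {R M : ℝ} (hR : 0 < R) (hM : 0 < M)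
    (hg : DifferentiableOn ℂ g (ball 0 R)) (hg0 : ∀ z ∈ ball (0 : ℂ) R, g z ≠ 0)
    (hgM : ∀ z ∈ ball (0 : ℂ) R, ‖g z‖ ≤ ‖g 0‖ * exp M) {z w : ℂ}
    (hz : ‖z‖ ≤ R / 8) (hw : ‖w‖ ≤ R / 8) :
    ‖logDeriv g z - logDeriv g w‖ ≤ 64 * M / R ^ 2 * ‖z - w‖ := by
  obtain ⟨L, hL0, hL, hgL⟩ := exists_log_on_ball hR hg hg0
  have hlog : DifferentiableOn ℂ (logDeriv g) (ball 0 R) := (hg.deriv isOpen_ball).div hg hg0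
  have hLd : DifferentiableOn ℂ L (ball 0 R) := fun x hx ↦
    (hL x hx).differentiableAt.differentiableWithinAt
  have hre : MapsTo L (ball 0 R) {z | z.re ≤ M} := fun x hx ↦ by
    have h := hgM x hx
    rw [hgL x hx, norm_mul, Complex.norm_exp] at h
    exact exp_le_exp.mp (le_of_mul_le_mul_left h (norm_pos_iff.mpr (hg0 0 (mem_ball_self hR))))
  have hL_le : ∀ x, ‖x‖ ≤ R / 2 → ‖L x‖ ≤ 2 * M := fun x hx ↦ by
    refine (Complex.borelCaratheodory_zero hM hLd hre hR
      (mem_ball_zero_iff.mpr (by linarith)) hL0).trans ?_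
    rw [div_le_iff₀ (by linarith)]
    nlinarith
  have hlog_le : ∀ x, ‖x‖ ≤ R / 4 → ‖logDeriv g x‖ ≤ 2 * M / (R / 4) := fun x hx ↦ by
    rw [← (hL x (mem_ball_zero_iff.mpr (by linarith))).deriv]
    exact norm_deriv_le_of_norm_le (by linarith) (hLd.mono (ball_subset_ball (by linarith)))
      (fun y hy ↦ hL_le y (by linarith)) hx
  have hderiv_le : ∀ x ∈ closedBall (0 : ℂ) (R / 8), ‖deriv (logDeriv g) x‖ ≤ 64 * M / R ^ 2 :=
    fun x hx ↦ calc
      _ ≤ 2 * M / (R / 4) / (R / 8) :=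
        norm_deriv_le_of_norm_le (by linarith) (hlog.mono (ball_subset_ball (by linarith)))
          (fun y hy ↦ hlog_le y (by linarith)) (mem_closedBall_zero_iff.mp hx)
      _ = 64 * M / R ^ 2 := by field_simp; ring
  exact (convex_closedBall (0 : ℂ) (R / 8)).norm_image_sub_le_of_norm_deriv_le
    (fun x hx ↦ hlog.differentiableAt
      (isOpen_ball.mem_nhds (closedBall_subset_ball (by linarith) hx)))
    hderiv_le (mem_closedBall_zero_iff.mpr hw) (mem_closedBall_zero_iff.mpr hz)

lemma logDeriv_eq_sum_add_logDeriv {S : Finset ℂ} {m : ℂ → ℕ} (hg : Differentiable ℂ g)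
    (hS : ∀ ρ ∈ S, ρ ≠ 0) (hfg : ∀ z, f z = (∏ ρ ∈ S, (1 - z / ρ) ^ m ρ) * g z) {z : ℂ}
    (hzS : z ∉ S) (hz : f z ≠ 0) :
    logDeriv f z = ∑ ρ ∈ S, (m ρ : ℂ) * (1 / (z - ρ)) + logDeriv g z := by
  obtain ⟨hP, hgz⟩ := mul_ne_zero_iff.mp (hfg z ▸ hz)
  rw [show f = fun z ↦ (∏ ρ ∈ S, (1 - z / ρ) ^ m ρ) * g z from funext hfg,
    logDeriv_mul z hP hgz (by fun_prop) (hg z),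
    logDeriv_prod (fun i hi ↦ Finset.prod_ne_zero_iff.mp hP i hi) (by fun_prop)]
  congr 1
  refine Finset.sum_congr rfl fun ρ hρ ↦ ?_
  have hρ0 := hS ρ hρ
  have hzρ : z - ρ ≠ 0 := sub_ne_zero.mpr fun h ↦ hzS (h ▸ hρ)
  have hderiv : deriv (fun z : ℂ ↦ 1 - z / ρ) z = -(1 / ρ) := by
    rw [deriv_const_sub, deriv_div_const, deriv_id'']
  rw [logDeriv_fun_pow (by fun_prop), logDeriv_apply, hderiv,
    show 1 - z / ρ = -(z - ρ) / ρ by field_simp; ring]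
  field_simp

lemma norm_le_of_eq_prod_mul {S : Finset ℂ} {m : ℂ → ℕ} {R B : ℝ} (hR : 0 < R)
    (hg : Differentiable ℂ g) (hS : ∀ ρ ∈ S, ρ ≠ 0 ∧ ‖ρ‖ ≤ R)
    (hfg : ∀ z, f z = (∏ ρ ∈ S, (1 - z / ρ) ^ m ρ) * g z)
    (hB : ∀ z ∈ sphere (0 : ℂ) (4 * R), ‖f z‖ ≤ B) {z : ℂ} (hz : z ∈ ball 0 R) : ‖g z‖ ≤ B := by
  refine Complex.norm_le_of_forall_mem_frontier_norm_le (U := ball (0 : ℂ) (4 * R)) isBounded_ball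
    hg.diffContOnCl (fun y hy ↦ ?_) (subset_closure (ball_subset_ball (by linarith) hz))
  rw [frontier_ball _ (by linarith)] at hy
  have hprod : 1 ≤ ‖∏ ρ ∈ S, (1 - y / ρ) ^ m ρ‖ := by
    rw [norm_prod]
    refine Finset.one_le_prod fun ρ hρ ↦ ?_
    have hdiv : 4 ≤ ‖y / ρ‖ := by
      rw [norm_div, mem_sphere_zero_iff_norm.mp hy, le_div_iff₀ (norm_pos_iff.mpr (hS ρ hρ).1)]
      linarith [(hS ρ hρ).2]
    have htri := norm_sub_norm_le (y / ρ) 1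
    rw [norm_one, norm_sub_rev] at htri
    rw [norm_pow]
    exact one_le_pow₀ (by linarith)
  calc ‖g y‖ ≤ ‖∏ ρ ∈ S, (1 - y / ρ) ^ m ρ‖ * ‖g y‖ :=
        le_mul_of_one_le_left (norm_nonneg _) hprod
    _ = ‖f y‖ := by rw [hfg y, norm_mul]
    _ ≤ B := hB y hy

lemma tendsto_one_add_mul_rpow_div_sq {a c : ℝ} (hc : 0 < c) (ha : a < 2) :
    Tendsto (fun R : ℝ ↦ (1 + c * R) ^ a / R ^ 2) atTop (𝓝 0) := by
  have hlin : Tendsto (fun R : ℝ ↦ 1 + c * R) atTop atTop :=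
    tendsto_atTop_add_const_left _ _ (tendsto_id.const_mul_atTop hc)
  have hdecay : Tendsto (fun R : ℝ ↦ (1 + c * R) ^ (-(2 - a))) atTop (𝓝 0) :=
    (tendsto_rpow_neg_atTop (by linarith)).comp hlin
  have hratio : Tendsto (fun R : ℝ ↦ (1 / R + c) ^ 2) atTop (𝓝 ((0 + c) ^ 2)) :=
    ((tendsto_const_nhds.div_atTop tendsto_id).add tendsto_const_nhds).pow 2
  rw [← zero_mul ((0 + c) ^ 2)]
  refine (hdecay.mul hratio).congr' ?_
  filter_upwards [eventually_gt_atTop 0] with R hR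
  rw [neg_sub, rpow_sub (by positivity), rpow_two]
  field_simp

lemma tendsto_mul_one_add_mul_rpow_add_div_sq (A B : ℝ) {a c : ℝ} (hc : 0 < c) (ha : a < 2) :
    Tendsto (fun R : ℝ ↦ (A * (1 + c * R) ^ a + B) / R ^ 2) atTop (𝓝 0) := by
  have hgrowth := (tendsto_one_add_mul_rpow_div_sq hc ha).const_mul A
  have hconst := (tendsto_const_nhds (x := B)).div_atTop (tendsto_pow_atTop two_ne_zero)
  simpa only [add_div, mul_div_assoc, mul_zero, add_zero] using hgrowth.add hconst

/-- Hadamard's theorem in difference form: divide out the zeros in a disc of radius `R`; the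
logarithmic derivative of the zero-free quotient oscillates by `O(R ^ (a - 2))` near `0`. -/
theorem tendsto_sum_zerosInDisc_logDeriv_sub (hf : Differentiable ℂ f) (h0 : f 0 ≠ 0) {C a : ℝ}
    (ha : a < 2) (hC : ∀ z, ‖f z‖ ≤ exp (C * (1 + ‖z‖) ^ a)) {z w : ℂ}
    (hz : f z ≠ 0) (hw : f w ≠ 0) :
    Tendsto (fun R ↦ ∑ ρ ∈ zerosInDisc f R,
        (analyticOrderNatAt f ρ : ℂ) * (1 / (z - ρ) - 1 / (w - ρ)))
      atTop (𝓝 (logDeriv f z - logDeriv f w)) := by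
  set M : ℝ → ℝ := fun R ↦ |C| * (1 + 4 * R) ^ a + (|log ‖f 0‖| + 1)
  have hlim : Tendsto (fun R ↦ 64 * M R / R ^ 2 * ‖z - w‖) atTop (𝓝 0) := by
    simpa only [mul_div_assoc, mul_zero, zero_mul] using
      ((tendsto_mul_one_add_mul_rpow_add_div_sq |C| (|log ‖f 0‖| + 1) four_pos ha).const_mul
        64).mul_const ‖z - w‖
  rw [tendsto_iff_norm_sub_tendsto_zero]
  refine squeeze_zero' (Eventually.of_forall fun _ ↦ norm_nonneg _) ?_ hlim
  filter_upwards [eventually_gt_atTop 0, eventually_ge_atTop (8 * ‖z‖),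
    eventually_ge_atTop (8 * ‖w‖)] with R hR hRz hRw
  set S := zerosInDisc f R
  have mem_S {ρ : ℂ} : ρ ∈ S ↔ f ρ = 0 ∧ ‖ρ‖ ≤ R := mem_zerosInDisc hf h0
  have ne_zero : ∀ ρ ∈ S, ρ ≠ 0 := fun ρ hρ h ↦ h0 (h ▸ (mem_S.mp hρ).1)
  obtain ⟨g, hg, hgS, hfg⟩ :=
    exists_eq_prod_one_sub_div_pow_mul hf h0 S fun ρ hρ ↦ (mem_S.mp hρ).1
  have hgf0 : g 0 = f 0 := by simp [hfg 0]
  have hg_ne : ∀ x ∈ ball (0 : ℂ) R, g x ≠ 0 := fun x hx hgx ↦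
    hgS x (mem_S.mpr ⟨by rw [hfg, hgx, mul_zero], (mem_ball_zero_iff.mp hx).le⟩) hgx
  have hMpos : 0 < M R := by positivity
  have hg_le : ∀ x ∈ ball (0 : ℂ) R, ‖g x‖ ≤ ‖g 0‖ * exp (M R) := fun x hx ↦ calc
    ‖g x‖ ≤ exp (|C| * (1 + 4 * R) ^ a) := by
      refine norm_le_of_eq_prod_mul hR hg (fun ρ hρ ↦ ⟨ne_zero ρ hρ, (mem_S.mp hρ).2⟩) hfg
        (fun y hy ↦ (hC y).trans ?_) hx
      rw [mem_sphere_zero_iff_norm.mp hy]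
      gcongr
      exact le_abs_self C
    _ ≤ exp (log ‖f 0‖ + M R) := by
      gcongr
      linarith [neg_abs_le (log ‖f 0‖)]
    _ = ‖g 0‖ * exp (M R) := by rw [exp_add, exp_log (norm_pos_iff.mpr h0), hgf0]
  have hlogDeriv {x : ℂ} (hx : f x ≠ 0) :=
    logDeriv_eq_sum_add_logDeriv hg ne_zero hfg (fun h ↦ hx (mem_S.mp h).1) hx
  calc _ = ‖logDeriv g z - logDeriv g w‖ := by
        simp only [hlogDeriv hz, hlogDeriv hw, mul_sub, Finset.sum_sub_distrib]
        rw [norm_sub_rev]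
        congr 1
        ring
    _ ≤ _ := norm_logDeriv_sub_logDeriv_le hR hMpos hg.differentiableOn hg_ne hg_le
        (by linarith) (by linarith)

end Hadamard

section Xi

open MeasureTheory Topology

variable {s : ℂ}

lemma exists_norm_mellin_le {E : Type*} [NormedAddCommGroup E] [NormedSpace ℂ E] {f : ℝ → E}
    {a b : ℂ} (ha : MellinConvergent f a) (hb : MellinConvergent f b) :
    ∃ B, 0 ≤ B ∧ ∀ s : ℂ, a.re ≤ s.re → s.re ≤ b.re → ‖mellin f s‖ ≤ B := by
  refine ⟨∫ t in Ioi (0 : ℝ), (‖(t : ℂ) ^ (a - 1) • f t‖ + ‖(t : ℂ) ^ (b - 1) • f t‖),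
    integral_nonneg fun t ↦ by positivity, fun s has hsb ↦ ?_⟩
  refine norm_integral_le_of_norm_le (ha.norm.add hb.norm) ?_
  refine (ae_restrict_iff' measurableSet_Ioi).mpr (Eventually.of_forall fun t (ht : 0 < t) ↦ ?_)
  simp only [norm_smul, Complex.norm_cpow_eq_rpow_re_of_pos ht, ← add_mul, Complex.sub_re,
    Complex.one_re]
  gcongr
  rcases le_total t 1 with h | h
  · exact (rpow_le_rpow_of_exponent_ge ht h (by linarith)).trans
      (le_add_of_nonneg_right (by positivity))
  · exact (rpow_le_rpow_of_exponent_le h (by linarith)).trans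
      (le_add_of_nonneg_left (by positivity))

lemma exists_norm_completedRiemannZeta₀_le (c : ℝ) :
    ∃ B, 0 ≤ B ∧ ∀ s : ℂ, |s.re| ≤ c → ‖completedRiemannZeta₀ s‖ ≤ B := by
  set P := HurwitzZeta.hurwitzEvenFEPair 0
  have hconv (s : ℂ) : MellinConvergent P.f_modif s :=
    (P.isStrongFEPair_toStrongFEPair.hasMellin s).1
  obtain ⟨B, hB0, hB⟩ := exists_norm_mellin_le (hconv (-c / 2)) (hconv (c / 2))
  refine ⟨B / 2, by positivity, fun s hs ↦ ?_⟩
  change ‖P.Λ₀ (s / 2) / 2‖ ≤ B / 2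
  rw [norm_div, Complex.norm_ofNat]
  rw [abs_le] at hs
  gcongr
  exact hB _ (by simp; linarith) (by simp; linarith)

lemma norm_Gamma_le_Gamma_re (hs : 0 < s.re) : ‖Complex.Gamma s‖ ≤ Gamma s.re := by
  rw [Complex.Gamma_eq_integral hs, Gamma_eq_integral hs, Complex.GammaIntegral]
  refine (norm_integral_le_integral_norm _).trans (setIntegral_congr_fun measurableSet_Ioi ?_).le
  intro t ht
  simp [Complex.norm_cpow_eq_rpow_re_of_pos ht, Complex.norm_exp]

lemma Gamma_le_exp {x : ℝ} (hx : 2 ≤ x) : Gamma x ≤ exp (2 * (1 + x) ^ (3 / 2 : ℝ)) := by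
  have hx1 : 0 < 1 + x := by linarith
  have hceil : (⌈x⌉₊ : ℝ) ≤ 1 + x := by linarith [Nat.ceil_lt_add_one (by linarith : 0 ≤ x)]
  have hlog : log (1 + x) ≤ 2 * (1 + x) ^ (1 / 2 : ℝ) := by
    linarith [log_le_rpow_div hx1.le (by norm_num : (0 : ℝ) < 1 / 2)]
  calc Gamma x ≤ Gamma (⌈x⌉₊ + 1) :=
        Gamma_strictMonoOn_Ici.monotoneOn (by simpa using hx)
          (mem_Ici.mpr (by linarith [Nat.le_ceil x])) (by linarith [Nat.le_ceil x])
    _ = (⌈x⌉₊.factorial : ℝ) := Gamma_nat_eq_factorial _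
    _ ≤ (⌈x⌉₊ : ℝ) ^ ⌈x⌉₊ := by exact_mod_cast Nat.factorial_le_pow _
    _ ≤ (1 + x) ^ ⌈x⌉₊ := by gcongr
    _ = (1 + x) ^ (⌈x⌉₊ : ℝ) := (rpow_natCast _ _).symm
    _ ≤ (1 + x) ^ (1 + x) := rpow_le_rpow_of_exponent_le (by linarith) hceil
    _ = exp (log (1 + x) * (1 + x)) := rpow_def_of_pos hx1 _
    _ ≤ exp (2 * (1 + x) ^ (1 / 2 : ℝ) * (1 + x)) := by gcongr
    _ = exp (2 * (1 + x) ^ (3 / 2 : ℝ)) := by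
        rw [mul_assoc, ← rpow_add_one hx1.ne']
        norm_num

lemma norm_riemannZeta_le_two (hs : 2 ≤ s.re) : ‖riemannZeta s‖ ≤ 2 := by
  rw [zeta_eq_tsum_one_div_nat_add_one_cpow (by linarith)]
  have hsum : HasSum (fun n : ℕ ↦ 1 / ((n : ℝ) + 1) ^ 2) (π ^ 2 / 6) := by
    simpa using (hasSum_nat_add_iff' 1).mpr hasSum_zeta_two
  refine (tsum_of_norm_bounded hsum fun n ↦ ?_).trans (by nlinarith [pi_lt_d2, pi_pos])
  have hn : (0 : ℝ) < n + 1 := by positivity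
  rw [norm_div, norm_one, ← Nat.cast_add_one, ← Complex.ofReal_natCast, Nat.cast_add_one,
    Complex.norm_cpow_eq_rpow_re_of_pos hn, ← rpow_two]
  gcongr
  linarith

/-- The entire function `2ξ(s) = s(s - 1)π^{-s/2}Γ(s/2)ζ(s)`. -/
noncomputable def xi (s : ℂ) : ℂ := s * (s - 1) * completedRiemannZeta₀ s + 1

lemma differentiable_xi : Differentiable ℂ xi := by
  have := differentiable_completedZeta₀
  unfold xi
  fun_prop

lemma xi_zero : xi 0 = 1 := by simp [xi]

lemma xi_zero_ne_zero : xi 0 ≠ 0 := by simp [xi_zero]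

lemma xi_one : xi 1 = 1 := by simp [xi]

lemma xi_one_sub (s : ℂ) : xi (1 - s) = xi s := by
  rw [xi, xi, completedRiemannZeta₀_one_sub]
  ring

lemma xi_eq_mul_completedRiemannZeta (h0 : s ≠ 0) (h1 : s ≠ 1) :
    xi s = s * (s - 1) * completedRiemannZeta s := by
  rw [xi, completedRiemannZeta_eq]
  have : 1 - s ≠ 0 := sub_ne_zero.mpr h1.symm
  field

lemma ne_one_of_one_lt_re (hs : 1 < s.re) : s ≠ 1 := by
  rintro rfl
  simp at hs

lemma xi_eq_mul_riemannZeta (hs : 1 < s.re) :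
    xi s = 2 * (s - 1) * (riemannZeta s * (π ^ (-s / 2) * Complex.Gamma (s / 2 + 1))) := by
  have h0 : s ≠ 0 := Complex.ne_zero_of_one_lt_re hs
  have hG : s.Gammaℝ ≠ 0 := Complex.Gammaℝ_ne_zero_of_re_pos (by linarith)
  have hΛ : completedRiemannZeta s = riemannZeta s * s.Gammaℝ := by
    rw [riemannZeta_def_of_ne_zero h0, div_mul_cancel₀ _ hG]
  rw [xi_eq_mul_completedRiemannZeta h0 (ne_one_of_one_lt_re hs), hΛ, Complex.Gammaℝ_def,
    Complex.Gamma_add_one _ (by simpa using h0)]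
  ring

lemma Gamma_half_add_one_ne_zero (hs : 1 < s.re) : Complex.Gamma (s / 2 + 1) ≠ 0 :=
  Complex.Gamma_ne_zero_of_re_pos (by simp; linarith)

lemma xi_ne_zero_of_one_lt_re (hs : 1 < s.re) : xi s ≠ 0 := by
  rw [xi_eq_mul_riemannZeta hs]
  have := sub_ne_zero.mpr (ne_one_of_one_lt_re hs)
  have := riemannZeta_ne_zero_of_one_lt_re hs
  have := Gamma_half_add_one_ne_zero hs
  have : (π : ℂ) ≠ 0 := by simp [pi_ne_zero]
  simp_all [Complex.cpow_eq_zero_iff]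

lemma re_eq_half_of_xi_eq_zero (hRH : RiemannHypothesis) (h : xi s = 0) : s.re = 1 / 2 := by
  have h0 : s ≠ 0 := by
    rintro rfl
    simp [xi_zero] at h
  have h1 : s ≠ 1 := by
    rintro rfl
    simp [xi_one] at h
  refine hRH s ?_ ?_ h1
  · have : completedRiemannZeta s = 0 := by
      simpa [xi_eq_mul_completedRiemannZeta h0 h1, h0, sub_ne_zero.mpr h1] using h
    rw [riemannZeta_def_of_ne_zero h0, this, zero_div]
  · rintro ⟨n, rfl⟩
    refine xi_ne_zero_of_one_lt_re (s := 1 - -2 * (n + 1)) ?_ (by rw [xi_one_sub, h])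
    suffices (0 : ℝ) < n + 1 by simpa
    positivity

lemma norm_xi_le_of_two_le_re (hs : 2 ≤ s.re) : ‖xi s‖ ≤ exp (5 * (1 + ‖s‖) ^ (3 / 2 : ℝ)) := by
  have hre : (s / 2 + 1).re = s.re / 2 + 1 := by simp
  set X := 1 + ‖s‖ with hX
  have hsX : s.re + 1 ≤ X := by linarith [s.re_le_norm]
  have hΓ : ‖Complex.Gamma (s / 2 + 1)‖ ≤ exp (2 * X ^ (3 / 2 : ℝ)) := by
    refine (norm_Gamma_le_Gamma_re (by rw [hre]; linarith)).trans
      ((Gamma_le_exp (by rw [hre]; linarith)).trans ?_)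
    rw [hre]
    gcongr
    linarith
  have hπ : ‖(π : ℂ) ^ (-s / 2)‖ ≤ 1 := by
    rw [Complex.norm_cpow_eq_rpow_re_of_pos pi_pos]
    exact rpow_le_one_of_one_le_of_nonpos (by linarith [pi_gt_three]) (by simp; linarith)
  have hs1 : ‖2 * (s - 1)‖ ≤ 2 * X := by
    rw [norm_mul, Complex.norm_ofNat, hX, add_comm 1]
    gcongr
    simpa using norm_sub_le s 1
  have hXexp : X + 1 ≤ exp X := add_one_le_exp X
  calc ‖xi s‖ = ‖2 * (s - 1)‖ *
        (‖riemannZeta s‖ * (‖(π : ℂ) ^ (-s / 2)‖ * ‖Complex.Gamma (s / 2 + 1)‖)) := by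
        simp only [xi_eq_mul_riemannZeta (show 1 < s.re by linarith), norm_mul]
    _ ≤ 2 * X * (2 * (1 * exp (2 * X ^ (3 / 2 : ℝ)))) := by
        gcongr
        exact norm_riemannZeta_le_two hs
    _ = 2 * 2 * X * exp (2 * X ^ (3 / 2 : ℝ)) := by ring
    _ ≤ exp X * exp X * exp X * exp (2 * X ^ (3 / 2 : ℝ)) := by
        gcongr <;> linarith
    _ = exp (3 * X + 2 * X ^ (3 / 2 : ℝ)) := by
        rw [← exp_add, ← exp_add, ← exp_add]
        ring_nf
    _ ≤ exp (5 * X ^ (3 / 2 : ℝ)) := by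
        have := self_le_rpow_of_one_le (by linarith : 1 ≤ X) (by norm_num : (1 : ℝ) ≤ 3 / 2)
        gcongr
        linarith

lemma norm_xi_le_of_norm_completedRiemannZeta₀_le {B : ℝ} (hs : ‖completedRiemannZeta₀ s‖ ≤ B) :
    ‖xi s‖ ≤ exp ((2 + B) * (1 + ‖s‖) ^ (3 / 2 : ℝ)) := by
  have hB : 0 ≤ B := (norm_nonneg _).trans hs
  set X := 1 + ‖s‖ with hX
  have hX1 : 1 ≤ X := by simp [hX]
  have hs1 : ‖s - 1‖ ≤ X := by simpa [hX, add_comm] using norm_sub_le s 1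
  have hXpow : X ≤ X ^ (3 / 2 : ℝ) := self_le_rpow_of_one_le hX1 (by norm_num)
  calc ‖xi s‖ ≤ ‖s * (s - 1)‖ * ‖completedRiemannZeta₀ s‖ + 1 := by
        simpa [xi] using norm_add_le (s * (s - 1) * completedRiemannZeta₀ s) 1
    _ ≤ X * X * B + X * X := by
        rw [norm_mul]
        gcongr
        · simp [hX]
        · nlinarith
    _ = X * X * (B + 1) := by ring
    _ ≤ exp X * exp X * exp B := by
        gcongr <;> linarith [add_one_le_exp X, add_one_le_exp B]
    _ = exp (2 * X + B) := by
        rw [← exp_add, ← exp_add, two_mul]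
    _ ≤ exp ((2 + B) * X ^ (3 / 2 : ℝ)) := by
        gcongr
        nlinarith

lemma exists_norm_xi_le : ∃ C, ∀ s, ‖xi s‖ ≤ exp (C * (1 + ‖s‖) ^ (3 / 2 : ℝ)) := by
  obtain ⟨B, hB0, hB⟩ := exists_norm_completedRiemannZeta₀_le 2
  have mono : ∀ {C s}, ‖xi s‖ ≤ exp (C * (1 + ‖s‖) ^ (3 / 2 : ℝ)) → C ≤ 20 + B →
      ‖xi s‖ ≤ exp ((20 + B) * (1 + ‖s‖) ^ (3 / 2 : ℝ)) := fun h hC ↦ h.trans (by gcongr)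
  refine ⟨20 + B, fun s ↦ ?_⟩
  rcases le_total 2 s.re with h | h
  · exact mono (norm_xi_le_of_two_le_re h) (by linarith)
  rcases le_total (-2) s.re with h' | h'
  · exact mono (norm_xi_le_of_norm_completedRiemannZeta₀_le (hB s (abs_le.mpr ⟨h', h⟩)))
      (by linarith)
  refine mono (C := 20) ?_ (by linarith)
  have h_two_rpow : (2 : ℝ) ^ (3 / 2 : ℝ) ≤ 4 := by
    have : (2 : ℝ) ^ (3 / 2 : ℝ) ≤ 2 ^ (2 : ℝ) :=
      rpow_le_rpow_of_exponent_le (by norm_num) (by norm_num)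
    norm_num at this ⊢
    exact this
  rw [← xi_one_sub]
  calc ‖xi (1 - s)‖ ≤ exp (5 * (1 + ‖1 - s‖) ^ (3 / 2 : ℝ)) :=
        norm_xi_le_of_two_le_re (by simp; linarith)
    _ ≤ exp (5 * (2 * (1 + ‖s‖)) ^ (3 / 2 : ℝ)) := by
        have : ‖1 - s‖ ≤ 1 + ‖s‖ := by simpa using norm_sub_le 1 s
        gcongr
        linarith [norm_nonneg s]
    _ = exp (5 * 2 ^ (3 / 2 : ℝ) * (1 + ‖s‖) ^ (3 / 2 : ℝ)) := by
        rw [mul_rpow (by norm_num) (by positivity), mul_assoc]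
    _ ≤ exp (20 * (1 + ‖s‖) ^ (3 / 2 : ℝ)) := by
        gcongr
        linarith

lemma logDeriv_xi_one_sub (s : ℂ) : logDeriv xi (1 - s) = -logDeriv xi s := by
  have hderiv : deriv xi s = -deriv xi (1 - s) := by
    rw [← deriv_comp_const_sub]
    exact congrArg (deriv · s) (funext fun z ↦ (xi_one_sub z).symm)
  rw [logDeriv_apply, logDeriv_apply, hderiv, xi_one_sub, neg_div, neg_neg]

lemma logDeriv_xi_one :
    logDeriv xi 1 = (((eulerMascheroniConstant - log (4 * π)) / 2 + 1 : ℝ) : ℂ) := by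
  have hderiv : HasDerivAt xi (completedRiemannZeta₀ 1) 1 := by
    have hpoly : HasDerivAt (fun s : ℂ ↦ s * (s - 1)) (1 * (1 - 1) + 1 * 1) 1 :=
      (hasDerivAt_id (1 : ℂ)).mul ((hasDerivAt_id (1 : ℂ)).sub_const 1)
    exact ((hpoly.mul (differentiable_completedZeta₀ 1).hasDerivAt).add_const 1).congr_deriv
      (by simp)
  rw [logDeriv_apply, hderiv.deriv, xi_one, div_one, completedRiemannZeta₀_one]
  push_cast
  rw [Complex.ofReal_log (by positivity)]
  push_cast
  rfl

lemma hasDerivAt_Gamma_half_add_one (hs : 1 < s.re) :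
    HasDerivAt (fun z ↦ Complex.Gamma (z / 2 + 1)) (deriv Complex.Gamma (s / 2 + 1) * (1 / 2))
      s := by
  have hpole : ∀ m : ℕ, s / 2 + 1 ≠ -m := fun m hm ↦ by
    have := congrArg Complex.re hm
    simp at this
    linarith [(m.cast_nonneg : (0 : ℝ) ≤ m)]
  exact (Complex.differentiableAt_Gamma _ hpole).hasDerivAt.comp s
    (((hasDerivAt_id s).div_const 2).add_const 1)

lemma logDeriv_xi (hs : 1 < s.re) :
    logDeriv xi s = 1 / (s - 1) + deriv riemannZeta s / riemannZeta s - log π / 2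
      + Complex.digamma (s / 2 + 1) / 2 := by
  have hs1 : s - 1 ≠ 0 := sub_ne_zero.mpr (ne_one_of_one_lt_re hs)
  have hev : xi =ᶠ[𝓝 s] fun z ↦ 2 * (z - 1) *
      (riemannZeta z * (π ^ (-z / 2) * Complex.Gamma (z / 2 + 1))) := by
    filter_upwards [(isOpen_lt continuous_const Complex.continuous_re).mem_nhds hs] with z hz
      using xi_eq_mul_riemannZeta hz
  have hζ := differentiableAt_riemannZeta (ne_one_of_one_lt_re hs)
  have hlin : HasDerivAt (fun z : ℂ ↦ 2 * (z - 1)) (2 * 1) s :=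
    ((hasDerivAt_id s).sub_const 1).const_mul 2
  have hπ : HasDerivAt (fun z : ℂ ↦ (π : ℂ) ^ (-z / 2))
      ((π : ℂ) ^ (-s / 2) * Complex.log π * (-1 / 2)) s :=
    ((hasDerivAt_id s).neg.div_const 2).const_cpow (Or.inl (by simp [pi_ne_zero]))
  have hπ0 : (π : ℂ) ^ (-s / 2) ≠ 0 := by simp [Complex.cpow_eq_zero_iff, pi_ne_zero]
  have hΓ := hasDerivAt_Gamma_half_add_one hs
  have hζ0 := riemannZeta_ne_zero_of_one_lt_re hs
  have hΓ0 := Gamma_half_add_one_ne_zero hs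
  have hπΓ : DifferentiableAt ℂ (fun z ↦ (π : ℂ) ^ (-z / 2) * Complex.Gamma (z / 2 + 1)) s :=
    hπ.differentiableAt.mul hΓ.differentiableAt
  have hζπΓ : DifferentiableAt ℂ
      (fun z ↦ riemannZeta z * ((π : ℂ) ^ (-z / 2) * Complex.Gamma (z / 2 + 1))) s := hζ.mul hπΓ
  rw [logDeriv_congr_nhds hev |>.self_of_nhds,
    logDeriv_mul s (by simpa using hs1) (by exact mul_ne_zero hζ0 (mul_ne_zero hπ0 hΓ0))
      hlin.differentiableAt hζπΓ,
    logDeriv_mul s hζ0 (by exact mul_ne_zero hπ0 hΓ0) hζ hπΓ,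
    logDeriv_mul s hπ0 hΓ0 hπ.differentiableAt hΓ.differentiableAt]
  simp only [logDeriv_apply, hlin.deriv, hπ.deriv, hΓ.deriv, Complex.digamma_def,
    Complex.ofReal_log pi_pos.le]
  field

end Xi

section Digamma

open Topology

lemma ne_neg_natCast_of_pos {x : ℝ} (hx : 0 < x) (m : ℕ) : x ≠ -m := by
  linarith [(m.cast_nonneg : (0 : ℝ) ≤ m)]

lemma ne_neg_natCast_of_re_pos {s : ℂ} (hs : 0 < s.re) (m : ℕ) : s ≠ -m := fun h ↦
  ne_neg_natCast_of_pos hs m (by simp [h])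

/-- The digamma function `Γ'/Γ` of a real variable. -/
noncomputable def realDigamma : ℝ → ℝ := logDeriv Gamma

lemma digamma_ofReal {x : ℝ} (hx : 0 < x) : Complex.digamma x = realDigamma x := by
  have hΓ : HasDerivAt (fun y : ℝ ↦ Complex.Gamma y) (deriv Complex.Gamma x) x :=
    (Complex.differentiableAt_Gamma x
      (ne_neg_natCast_of_re_pos (by simpa using hx))).hasDerivAt.comp_ofReal
  have hΓ' : HasDerivAt (fun y : ℝ ↦ (Gamma y : ℂ)) (deriv Gamma x : ℝ) x :=
    (differentiableAt_Gamma (ne_neg_natCast_of_pos hx)).hasDerivAt.ofReal_comp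
  simp only [Complex.Gamma_ofReal] at hΓ
  rw [Complex.digamma_def, realDigamma, logDeriv_apply, logDeriv_apply, hΓ.unique hΓ',
    Complex.Gamma_ofReal, Complex.ofReal_div]

lemma hasDerivAt_log_Gamma {x : ℝ} (hx : 0 < x) : HasDerivAt (log ∘ Gamma) (realDigamma x) x :=
  (differentiableAt_Gamma (ne_neg_natCast_of_pos hx)).hasDerivAt.log (Gamma_pos_of_pos hx).ne'

lemma slope_log_Gamma {x : ℝ} (hx : 0 < x) : slope (log ∘ Gamma) x (x + 1) = log x := by
  simp [slope_def_field, Gamma_add_one hx.ne', log_mul hx.ne' (Gamma_pos_of_pos hx).ne']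

lemma realDigamma_le_log {x : ℝ} (hx : 0 < x) : realDigamma x ≤ log x := by
  rw [← slope_log_Gamma hx]
  exact convexOn_log_Gamma.le_slope_of_hasDerivAt hx (mem_Ioi.mpr (by linarith)) (by linarith)
    (hasDerivAt_log_Gamma hx)

lemma log_le_realDigamma_add_one {x : ℝ} (hx : 0 < x) : log x ≤ realDigamma (x + 1) := by
  rw [← slope_log_Gamma hx]
  exact convexOn_log_Gamma.slope_le_of_hasDerivAt hx (mem_Ioi.mpr (by linarith)) (by linarith)
    (hasDerivAt_log_Gamma (by linarith))

lemma realDigamma_add_one {x : ℝ} (hx : 0 < x) : realDigamma (x + 1) = realDigamma x + x⁻¹ := by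
  have h := Complex.digamma_apply_add_one x (ne_neg_natCast_of_re_pos (by simpa using hx))
  rw [digamma_ofReal hx, ← Complex.ofReal_one, ← Complex.ofReal_add,
    digamma_ofReal (by linarith)] at h
  exact_mod_cast h

lemma realDigamma_one : realDigamma 1 = -eulerMascheroniConstant := by
  have h := digamma_ofReal one_pos
  rw [Complex.ofReal_one, Complex.digamma_one] at h
  exact_mod_cast h.symm

lemma realDigamma_add_natCast {x : ℝ} (hx : 0 < x) (N : ℕ) :
    realDigamma (x + N) = realDigamma x + ∑ k ∈ Finset.range N, (x + k)⁻¹ := by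
  induction N with
  | zero => simp
  | succ n ih =>
    rw [Finset.sum_range_succ, ← add_assoc, ← ih, Nat.cast_succ, ← add_assoc,
      realDigamma_add_one (by positivity)]

lemma log_sub_inv_le_realDigamma {x : ℝ} (hx : 0 < x) : log x - x⁻¹ ≤ realDigamma x := by
  linarith [log_le_realDigamma_add_one hx, realDigamma_add_one hx]

lemma tendsto_realDigamma_add_natCast_sub {x : ℝ} (hx : 0 ≤ x) :
    Tendsto (fun N : ℕ ↦ realDigamma (x + 1 + N) - realDigamma (1 + N)) atTop (𝓝 0) := by
  have hlim : Tendsto (fun N : ℕ ↦ (x + 1) * (1 / ((N : ℝ) + 1))) atTop (𝓝 0) := by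
    simpa using tendsto_one_div_add_atTop_nhds_zero_nat.const_mul (x + 1)
  refine squeeze_zero_norm (fun N ↦ ?_) hlim
  have hN : (0 : ℝ) < 1 + N := by positivity
  have hlog : log (x + 1 + N) - log (1 + N) ≤ x / (1 + N) := by
    rw [← log_div (by positivity) (by positivity)]
    refine (log_le_sub_one_of_pos (by positivity)).trans_eq ?_
    field
  have hinv : (x + 1 + N)⁻¹ ≤ (1 + (N : ℝ))⁻¹ := by
    gcongr
    linarith
  have hmono : log (1 + N) ≤ log (x + 1 + N) := log_le_log hN (by linarith)
  have := realDigamma_le_log hN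
  have := log_sub_inv_le_realDigamma hN
  have := realDigamma_le_log (x := x + 1 + N) (by positivity)
  have := log_sub_inv_le_realDigamma (x := x + 1 + N) (by positivity)
  have hsplit : (x + 1) * (1 / ((N : ℝ) + 1)) = x / (1 + N) + (1 + (N : ℝ))⁻¹ := by
    rw [add_comm (N : ℝ)]
    ring
  have : 0 ≤ x / (1 + N) := by positivity
  rw [norm_eq_abs, hsplit, abs_le]
  constructor <;> linarith

lemma hasSum_realDigamma {x : ℝ} (hx : 0 ≤ x) :
    HasSum (fun n : ℕ ↦ x / ((n + 1) * (n + 1 + x)))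
      (realDigamma (x + 1) + eulerMascheroniConstant) := by
  rw [hasSum_iff_tendsto_nat_of_nonneg fun n ↦ by positivity]
  have hlim := (tendsto_realDigamma_add_natCast_sub hx).const_sub
    (realDigamma (x + 1) + eulerMascheroniConstant)
  rw [sub_zero] at hlim
  refine hlim.congr fun N ↦ ?_
  have hterm : ∀ k : ℕ, x / (((k : ℝ) + 1) * (k + 1 + x)) = (1 + (k : ℝ))⁻¹ - (x + 1 + k)⁻¹ :=
    fun k ↦ by field
  simp only [hterm, Finset.sum_sub_distrib]
  rw [realDigamma_add_natCast (by positivity : 0 < x + 1), realDigamma_add_natCast one_pos,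
    realDigamma_one]
  ring

lemma eqOn_re_pos_of_eq_ofReal {f g : ℂ → ℂ} (hf : DifferentiableOn ℂ f {s | 0 < s.re})
    (hg : DifferentiableOn ℂ g {s | 0 < s.re}) (h : ∀ x : ℝ, 0 < x → f x = g x) :
    EqOn f g {s | 0 < s.re} := by
  have hopen : IsOpen {s : ℂ | 0 < s.re} := isOpen_lt continuous_const Complex.continuous_re
  refine (hf.analyticOnNhd hopen).eqOn_of_preconnected_of_mem_closure (hg.analyticOnNhd hopen)
    (convex_halfSpace_re_gt 0).isPreconnected (z₀ := 1) (by simp) ?_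
  have hlim : Tendsto (fun n : ℕ ↦ ((1 + 1 / ((n : ℝ) + 1) : ℝ) : ℂ)) atTop (𝓝 1) := by
    simpa [Function.comp_def] using (Complex.continuous_ofReal.tendsto _).comp
      (tendsto_one_div_add_atTop_nhds_zero_nat.const_add (1 : ℝ))
  refine mem_closure_of_tendsto hlim (Eventually.of_forall fun n ↦ ⟨h _ (by positivity), ?_⟩)
  rw [mem_singleton_iff, ← Complex.ofReal_one, Complex.ofReal_inj]
  have : (0 : ℝ) < 1 / (n + 1) := by positivity
  linarith

lemma summable_one_div_natCast_add_one_sq : Summable fun n : ℕ ↦ 1 / ((n : ℝ) + 1) ^ 2 := by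
  simpa using (summable_nat_add_iff 1).mpr
    (summable_one_div_nat_pow.mpr (by norm_num : 1 < 2))

lemma norm_div_natCast_mul_le {s : ℂ} (hs : 0 ≤ s.re) (n : ℕ) :
    ‖s / ((n + 1) * (n + 1 + s))‖ ≤ ‖s‖ * (1 / ((n : ℝ) + 1) ^ 2) := by
  have hn : ‖(n : ℂ) + 1‖ = n + 1 := by exact_mod_cast Complex.norm_natCast (n + 1)
  have hns : (n : ℝ) + 1 ≤ ‖(n : ℂ) + 1 + s‖ :=
    le_trans (by simpa using hs) (Complex.re_le_norm _)
  rw [norm_div, norm_mul, hn, div_eq_mul_one_div, sq]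
  gcongr

lemma differentiableOn_tsum_div_natCast_mul :
    DifferentiableOn ℂ (fun s : ℂ ↦ ∑' n : ℕ, s / ((n + 1) * (n + 1 + s))) {s | 0 < s.re} := by
  intro s hs
  set U : Set ℂ := {z | 0 < z.re} ∩ Metric.ball 0 (‖s‖ + 1)
  have hU : IsOpen U :=
    (isOpen_lt continuous_const Complex.continuous_re).inter Metric.isOpen_ball
  have hsU : s ∈ U := ⟨hs, by simp⟩
  refine ((Complex.differentiableOn_tsum_of_summable_norm
    (summable_one_div_natCast_add_one_sq.mul_left (‖s‖ + 1)) (fun n z hz ↦ ?_) hU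
    fun n z hz ↦ ?_).differentiableAt (hU.mem_nhds hsU)).differentiableWithinAt
  · have hne : ((n : ℂ) + 1) * (n + 1 + z) ≠ 0 := by
      refine mul_ne_zero (by exact_mod_cast n.succ_ne_zero) fun h ↦ ?_
      exact ne_neg_natCast_of_re_pos hz.1 (n + 1) (by push_cast; linear_combination h)
    have hden : DifferentiableAt ℂ (fun z : ℂ ↦ ((n : ℂ) + 1) * (n + 1 + z)) z := by fun_prop
    exact (differentiableAt_id.div hden hne).differentiableWithinAt
  · refine (norm_div_natCast_mul_le hz.1.le n).trans ?_
    gcongr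
    exact (mem_ball_zero_iff.mp hz.2).le

lemma differentiableOn_digamma_add_one :
    DifferentiableOn ℂ (fun s ↦ Complex.digamma (s + 1)) {s | 0 < s.re} := by
  intro s (hs : 0 < s.re)
  have hre : 0 < (s + 1).re := by
    rw [Complex.add_re, Complex.one_re]
    linarith
  have hΓ : AnalyticAt ℂ Complex.Gamma (s + 1) := by
    refine DifferentiableOn.analyticAt (s := {z | 0 < z.re}) (fun z hz ↦
      (Complex.differentiableAt_Gamma z (ne_neg_natCast_of_re_pos hz)).differentiableWithinAt) ?_
    exact (isOpen_lt continuous_const Complex.continuous_re).mem_nhds hre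
  have hdigamma : DifferentiableAt ℂ Complex.digamma (s + 1) :=
    hΓ.deriv.differentiableAt.div hΓ.differentiableAt (Complex.Gamma_ne_zero_of_re_pos hre)
  exact (hdigamma.comp s (differentiableAt_id.add_const 1)).differentiableWithinAt

lemma hasSum_digamma {s : ℂ} (hs : 0 < s.re) :
    HasSum (fun n : ℕ ↦ s / ((n + 1) * (n + 1 + s)))
      (Complex.digamma (s + 1) + eulerMascheroniConstant) := by
  have hsum : Summable fun n : ℕ ↦ s / ((n + 1) * (n + 1 + s)) :=
    (summable_one_div_natCast_add_one_sq.mul_left ‖s‖).of_norm_bounded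
      (norm_div_natCast_mul_le hs.le)
  refine hsum.hasSum_iff.mpr (eqOn_re_pos_of_eq_ofReal differentiableOn_tsum_div_natCast_mul
    (differentiableOn_digamma_add_one.add_const (eulerMascheroniConstant : ℂ)) (fun x hx ↦ ?_) hs)
  have h := (Complex.hasSum_ofReal.mpr (hasSum_realDigamma hx.le)).tsum_eq
  push_cast at h
  rw [h, ← digamma_ofReal (by positivity)]
  push_cast
  rfl

end Digamma

section ZerosInDisc

open Topology

variable {f : ℂ → ℂ}

lemma one_le_analyticOrderNatAt (hf : Differentiable ℂ f) (h0 : f 0 ≠ 0) {ρ : ℂ} (hρ : f ρ = 0) :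
    1 ≤ analyticOrderNatAt f ρ := by
  rw [Nat.one_le_iff_ne_zero, analyticOrderNatAt, Ne, ENat.toNat_eq_zero, not_or]
  exact ⟨fun h ↦ (hf.analyticAt ρ).analyticOrderAt_eq_zero.mp h hρ,
    analyticOrderAt_ne_top_of_differentiable hf h0 ρ⟩

lemma zerosInDisc_mono (hf : Differentiable ℂ f) (h0 : f 0 ≠ 0) : Monotone (zerosInDisc f) := by
  intro R S hRS ρ hρ
  rw [mem_zerosInDisc hf h0] at hρ ⊢
  exact ⟨hρ.1, hρ.2.trans hRS⟩

lemma eventually_forall_mem_zerosInDisc (hf : Differentiable ℂ f) (h0 : f 0 ≠ 0) (t : Finset ℂ) :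
    ∀ᶠ R in atTop, ∀ ρ ∈ t, f ρ = 0 → ρ ∈ zerosInDisc f R := by
  refine (Finset.eventually_all t).mpr fun ρ _ ↦ ?_
  filter_upwards [eventually_ge_atTop ‖ρ‖] with R hR hρ
  exact (mem_zerosInDisc hf h0).mpr ⟨hρ, hR⟩

lemma tendsto_sum_zerosInDisc_tsum (hf : Differentiable ℂ f) (h0 : f 0 ≠ 0) {E : Type*}
    [NormedAddCommGroup E] {a : ℂ → E} (ha : Summable a) (ha0 : ∀ ρ, f ρ ≠ 0 → a ρ = 0) :
    Tendsto (fun R ↦ ∑ ρ ∈ zerosInDisc f R, a ρ) atTop (𝓝 (∑' ρ, a ρ)) := by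
  classical
  refine tendsto_def.mpr fun U hU ↦ ?_
  obtain ⟨t, ht⟩ := mem_atTop_sets.mp (mem_map.mp (ha.hasSum hU))
  filter_upwards [eventually_forall_mem_zerosInDisc hf h0 t] with R hR
  have hsum : ∑ ρ ∈ zerosInDisc f R, a ρ = ∑ ρ ∈ t ∪ zerosInDisc f R, a ρ := by
    refine Finset.sum_subset Finset.subset_union_right fun ρ hρ hn ↦ ha0 ρ fun hz ↦ hn ?_
    exact (Finset.mem_union.mp hρ).elim (hR ρ · hz) id
  rw [mem_preimage, hsum]
  exact ht _ Finset.subset_union_left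

lemma hasSum_of_tendsto_sum_zerosInDisc (hf : Differentiable ℂ f) (h0 : f 0 ≠ 0) {a : ℂ → ℝ}
    (ha : ∀ ρ, 0 ≤ a ρ) (ha0 : ∀ ρ, f ρ ≠ 0 → a ρ = 0) {A : ℝ}
    (h : Tendsto (fun R ↦ ∑ ρ ∈ zerosInDisc f R, a ρ) atTop (𝓝 A)) : HasSum a A := by
  have hmono : Monotone fun R ↦ ∑ ρ ∈ zerosInDisc f R, a ρ := fun R S hRS ↦
    Finset.sum_le_sum_of_subset_of_nonneg (zerosInDisc_mono hf h0 hRS) fun ρ _ _ ↦ ha ρ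
  have hs : Summable a := by
    refine summable_of_sum_le ha (c := A) fun t ↦ ?_
    obtain ⟨R, hR⟩ := (eventually_forall_mem_zerosInDisc hf h0 t).exists
    calc ∑ ρ ∈ t, a ρ = ∑ ρ ∈ t with f ρ = 0, a ρ :=
          (Finset.sum_filter_of_ne fun ρ _ hρ ↦ not_imp_comm.mp (ha0 ρ) hρ).symm
      _ ≤ ∑ ρ ∈ zerosInDisc f R, a ρ :=
          Finset.sum_le_sum_of_subset_of_nonneg
            (fun ρ hρ ↦ hR ρ (Finset.mem_filter.mp hρ).1 (Finset.mem_filter.mp hρ).2)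
            fun ρ _ _ ↦ ha ρ
      _ ≤ A := hmono.ge_of_tendsto h R
  exact tendsto_nhds_unique h (tendsto_sum_zerosInDisc_tsum hf h0 hs ha0) ▸ hs.hasSum

end ZerosInDisc

section ZeroSums

open Topology
open scoped ArithmeticFunction.vonMangoldt

/-- The multiplicity of `ρ` as a zero of `xi`, which makes it possible to write the sums over the
nontrivial zeros as sums over all of `ℂ`. -/
noncomputable def zeroMult (ρ : ℂ) : ℝ := analyticOrderNatAt xi ρ

lemma zeroMult_nonneg (ρ : ℂ) : 0 ≤ zeroMult ρ := Nat.cast_nonneg _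

lemma zeroMult_eq_zero {ρ : ℂ} (h : xi ρ ≠ 0) : zeroMult ρ = 0 := by
  simp [zeroMult, analyticOrderNatAt,
    (differentiable_xi.analyticAt ρ).analyticOrderAt_eq_zero.mpr h]

lemma one_le_zeroMult {ρ : ℂ} (h : xi ρ = 0) : 1 ≤ zeroMult ρ :=
  Nat.one_le_cast.mpr (one_le_analyticOrderNatAt differentiable_xi xi_zero_ne_zero h)

lemma ne_zero_of_xi_eq_zero {ρ : ℂ} (h : xi ρ = 0) : ρ ≠ 0 := by
  rintro rfl
  exact xi_zero_ne_zero h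

lemma xi_ne_zero_of_re_ne_half (hRH : RiemannHypothesis) {s : ℂ} (h : s.re ≠ 1 / 2) : xi s ≠ 0 :=
  mt (re_eq_half_of_xi_eq_zero hRH) h

lemma tendsto_sum_zerosInDisc_xi {z w : ℂ} (hz : xi z ≠ 0) (hw : xi w ≠ 0) :
    Tendsto (fun R ↦ ∑ ρ ∈ zerosInDisc xi R, (zeroMult ρ : ℂ) * (1 / (z - ρ) - 1 / (w - ρ))) atTop
      (𝓝 (logDeriv xi z - logDeriv xi w)) := by
  obtain ⟨C, hC⟩ := exists_norm_xi_le
  simpa [zeroMult] using tendsto_sum_zerosInDisc_logDeriv_sub differentiable_xi xi_zero_ne_zero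
    (by norm_num) hC hz hw

/-- The logarithmic derivative of `xi` at `1 / 2 + G`. Under the Riemann Hypothesis it is the sum
over the zeros `1 / 2 + iγ` of the Poisson kernels `G / (G ^ 2 + γ ^ 2)`, so its numerical size
controls the number of zeros. -/
noncomputable def xiLogDeriv (G : ℝ) : ℝ := (logDeriv xi (1 / 2 + G)).re

lemma hasSum_zeroMult_mul_poisson (hRH : RiemannHypothesis) {G : ℝ} (hG : 0 < G) :
    HasSum (fun ρ ↦ zeroMult ρ * (G / (G ^ 2 + ρ.im ^ 2))) (xiLogDeriv G) := by
  refine hasSum_of_tendsto_sum_zerosInDisc differentiable_xi xi_zero_ne_zero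
    (fun ρ ↦ mul_nonneg (zeroMult_nonneg ρ) (by positivity))
    (fun ρ h ↦ by rw [zeroMult_eq_zero h, zero_mul]) ?_
  have hz : xi (1 / 2 + G) ≠ 0 := xi_ne_zero_of_re_ne_half hRH (by simpa using hG.ne')
  -- Reflecting `1 / 2 + G` in the critical line doubles the real part of each term.
  have hlim := tendsto_sum_zerosInDisc_xi hz (xi_one_sub (1 / 2 + G) ▸ hz)
  rw [logDeriv_xi_one_sub] at hlim
  have hre := ((Complex.continuous_re.tendsto _).comp hlim).div_const 2
  rw [show (logDeriv xi (1 / 2 + G) - -logDeriv xi (1 / 2 + G)).re / 2 = xiLogDeriv G by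
    simp [xiLogDeriv]] at hre
  refine hre.congr fun R ↦ ?_
  rw [Function.comp_apply, Complex.re_sum, Finset.sum_div]
  refine Finset.sum_congr rfl fun ρ hρ ↦ ?_
  have hρ_re : ρ.re = 1 / 2 := re_eq_half_of_xi_eq_zero hRH
    ((mem_zerosInDisc differentiable_xi xi_zero_ne_zero).mp hρ).1
  have hright : (1 / (1 / 2 + (G : ℂ) - ρ)).re = G / (G ^ 2 + ρ.im ^ 2) := by
    rw [one_div, Complex.inv_re, Complex.normSq_apply]
    simp [hρ_re]
    ring_nf
  have hleft : (1 / (1 - (1 / 2 + (G : ℂ)) - ρ)).re = -G / (G ^ 2 + ρ.im ^ 2) := by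
    rw [one_div, Complex.inv_re, Complex.normSq_apply]
    simp [hρ_re]
    ring_nf
  rw [Complex.re_ofReal_mul, Complex.sub_re, hright, hleft]
  ring

lemma norm_sq_of_xi_eq_zero (hRH : RiemannHypothesis) {ρ : ℂ} (h : xi ρ = 0) :
    ‖ρ‖ ^ 2 = (1 / 2) ^ 2 + ρ.im ^ 2 := by
  rw [Complex.sq_norm, Complex.normSq_apply, re_eq_half_of_xi_eq_zero hRH h]
  ring

lemma hasSum_zeroMult_div_norm_sq (hRH : RiemannHypothesis) :
    HasSum (fun ρ ↦ zeroMult ρ / ‖ρ‖ ^ 2) (2 * xiLogDeriv (1 / 2)) := by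
  refine ((hasSum_zeroMult_mul_poisson hRH one_half_pos).mul_left 2).congr_fun fun ρ ↦ ?_
  by_cases h : xi ρ = 0
  · rw [norm_sq_of_xi_eq_zero hRH h]
    ring
  · simp [zeroMult_eq_zero h]

lemma xiLogDeriv_half :
    xiLogDeriv (1 / 2) = (eulerMascheroniConstant - log (4 * π)) / 2 + 1 := by
  rw [xiLogDeriv, show (1 / 2 + ((1 / 2 : ℝ) : ℂ)) = 1 by push_cast; norm_num, logDeriv_xi_one,
    Complex.ofReal_re]

lemma logDeriv_xi_zero : logDeriv xi 0 = -(xiLogDeriv (1 / 2) : ℂ) := by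
  rw [xiLogDeriv_half, ← logDeriv_xi_one, ← logDeriv_xi_one_sub, sub_self]

lemma one_le_norm_sub_of_xi_eq_zero (hRH : RiemannHypothesis) {s ρ : ℂ}
    (hs : 1 ≤ |s.re - 1 / 2|) (h : xi ρ = 0) : 1 ≤ ‖s - ρ‖ := by
  refine le_trans ?_ (Complex.abs_re_le_norm _)
  rwa [Complex.sub_re, re_eq_half_of_xi_eq_zero hRH h]

lemma zeroMult_div_norm_mul_norm_sub_le (hRH : RiemannHypothesis) {s : ℂ}
    (hs : 1 ≤ |s.re - 1 / 2|) (ρ : ℂ) :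
    zeroMult ρ / (‖ρ‖ * ‖s - ρ‖) ≤ (1 + ‖s‖) * (zeroMult ρ / ‖ρ‖ ^ 2) := by
  by_cases h : xi ρ = 0
  · have hsub : 1 ≤ ‖s - ρ‖ := one_le_norm_sub_of_xi_eq_zero hRH hs h
    have hρ : 0 < ‖ρ‖ := norm_pos_iff.mpr (ne_zero_of_xi_eq_zero h)
    have hle : ‖ρ‖ ≤ (1 + ‖s‖) * ‖s - ρ‖ := by
      have : ‖ρ‖ ≤ ‖s‖ + ‖s - ρ‖ := by simpa using norm_sub_le s (s - ρ)
      nlinarith [norm_nonneg s]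
    calc zeroMult ρ / (‖ρ‖ * ‖s - ρ‖) = ‖ρ‖ * zeroMult ρ / (‖ρ‖ ^ 2 * ‖s - ρ‖) := by field
      _ ≤ (1 + ‖s‖) * ‖s - ρ‖ * zeroMult ρ / (‖ρ‖ ^ 2 * ‖s - ρ‖) := by
          have := zeroMult_nonneg ρ
          gcongr
      _ = (1 + ‖s‖) * (zeroMult ρ / ‖ρ‖ ^ 2) := by
          field_simp
  · simp [zeroMult_eq_zero h]

lemma summable_zeroMult_div_norm_mul_norm_sub (hRH : RiemannHypothesis) {s : ℂ}
    (hs : 1 ≤ |s.re - 1 / 2|) : Summable fun ρ ↦ zeroMult ρ / (‖ρ‖ * ‖s - ρ‖) :=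
  Summable.of_nonneg_of_le (fun ρ ↦ div_nonneg (zeroMult_nonneg ρ) (by positivity))
    (zeroMult_div_norm_mul_norm_sub_le hRH hs)
    ((hasSum_zeroMult_div_norm_sq hRH).summable.mul_left _)

theorem hasSum_logDeriv_xi (hRH : RiemannHypothesis) {s : ℂ} (hs : 1 ≤ |s.re - 1 / 2|) :
    HasSum (fun ρ ↦ (zeroMult ρ : ℂ) * (s / (ρ * (s - ρ)))) (logDeriv xi s - logDeriv xi 0) := by
  have hsum : Summable fun ρ ↦ (zeroMult ρ : ℂ) * (s / (ρ * (s - ρ))) := by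
    refine ((summable_zeroMult_div_norm_mul_norm_sub hRH hs).mul_left ‖s‖).of_norm_bounded
      fun ρ ↦ le_of_eq ?_
    rw [norm_mul, norm_div, norm_mul, Complex.norm_of_nonneg (zeroMult_nonneg ρ)]
    ring
  have hre : s.re ≠ 1 / 2 := fun h ↦ by norm_num [h] at hs
  have hlim := tendsto_sum_zerosInDisc_xi (xi_ne_zero_of_re_ne_half hRH hre) xi_zero_ne_zero
  have hlim' := tendsto_sum_zerosInDisc_tsum differentiable_xi xi_zero_ne_zero hsum
    fun ρ h ↦ by simp [zeroMult_eq_zero h]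
  rw [tendsto_nhds_unique (hlim.congr fun R ↦ Finset.sum_congr rfl fun ρ hρ ↦ ?_) hlim']
  · exact hsum.hasSum
  have hρ := ((mem_zerosInDisc differentiable_xi xi_zero_ne_zero).mp hρ).1
  have := ne_zero_of_xi_eq_zero hρ
  have : s - ρ ≠ 0 :=
    norm_pos_iff.mp (zero_lt_one.trans_le (one_le_norm_sub_of_xi_eq_zero hRH hs hρ))
  congr 1
  field_simp
  ring

lemma card_le_of_xi_eq_zero (hRH : RiemannHypothesis) {G : ℝ} (hG : 0 < G) {t : Finset ℂ}
    (ht : ∀ ρ ∈ t, xi ρ = 0 ∧ |ρ.im| ≤ G) : (t.card : ℝ) ≤ 2 * G * xiLogDeriv G := by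
  have hterm : ∀ ρ ∈ t, 1 / (2 * G) ≤ zeroMult ρ * (G / (G ^ 2 + ρ.im ^ 2)) := fun ρ hρ ↦ by
    have him : ρ.im ^ 2 ≤ G ^ 2 := sq_le_sq' (abs_le.mp (ht ρ hρ).2).1 (abs_le.mp (ht ρ hρ).2).2
    calc 1 / (2 * G) = G / (G ^ 2 + G ^ 2) := by field
      _ ≤ G / (G ^ 2 + ρ.im ^ 2) := by gcongr
      _ ≤ zeroMult ρ * (G / (G ^ 2 + ρ.im ^ 2)) :=
          le_mul_of_one_le_left (by positivity) (one_le_zeroMult (ht ρ hρ).1)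
  have hsum : t.card • (1 / (2 * G)) ≤ xiLogDeriv G :=
    (t.card_nsmul_le_sum _ _ hterm).trans <|
      sum_le_hasSum t (fun ρ _ ↦ mul_nonneg (zeroMult_nonneg ρ) (by positivity))
        (hasSum_zeroMult_mul_poisson hRH hG)
  rw [nsmul_eq_mul, mul_one_div, div_le_iff₀ (by positivity)] at hsum
  linarith

lemma zeroMult_div_norm_sq_le_of_lt_abs_im (hRH : RiemannHypothesis) {G : ℝ} (hG : 0 < G) {ρ : ℂ}
    (h : G < |ρ.im|) :
    zeroMult ρ / ‖ρ‖ ^ 2 ≤ 2 / G * (zeroMult ρ * (G / (G ^ 2 + ρ.im ^ 2))) := by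
  by_cases h0 : xi ρ = 0
  · have him : G ^ 2 ≤ ρ.im ^ 2 := (pow_le_pow_left₀ hG.le h.le 2).trans_eq (sq_abs _)
    have hpos : 0 < ρ.im ^ 2 := (pow_pos hG 2).trans_le him
    have hm := zeroMult_nonneg ρ
    calc zeroMult ρ / ‖ρ‖ ^ 2 ≤ zeroMult ρ / ((G ^ 2 + ρ.im ^ 2) / 2) := by
          rw [norm_sq_of_xi_eq_zero hRH h0]
          gcongr
          linarith
      _ = 2 / G * (zeroMult ρ * (G / (G ^ 2 + ρ.im ^ 2))) := by field
  · simp [zeroMult_eq_zero h0]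

lemma deriv_riemannZeta_div_ofReal {σ : ℝ} (hσ : 1 < σ) :
    deriv riemannZeta σ / riemannZeta σ = -((∑' n : ℕ, Λ n * (n : ℝ) ^ (-σ) : ℝ) : ℂ) := by
  have hseries : LSeries (fun n ↦ ((Λ n : ℝ) : ℂ)) σ
      = ((∑' n : ℕ, Λ n * (n : ℝ) ^ (-σ) : ℝ) : ℂ) := by
    rw [Complex.ofReal_tsum]
    refine tsum_congr fun n ↦ ?_
    rcases eq_or_ne n 0 with rfl | hn
    · simp
    · rw [LSeries.term_of_ne_zero hn, div_eq_mul_inv, ← Complex.cpow_neg, Complex.ofReal_mul,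
        Complex.ofReal_cpow n.cast_nonneg]
      simp
  rw [← hseries, ArithmeticFunction.LSeries_vonMangoldt_eq_deriv_riemannZeta_div
    (by simpa using hσ), neg_div, neg_neg]

lemma xiLogDeriv_eq {G : ℝ} (hG : 1 / 2 < G) :
    xiLogDeriv G = 1 / (G - 1 / 2) - ∑' n : ℕ, Λ n * (n : ℝ) ^ (-(1 / 2 + G)) - log π / 2
      + realDigamma ((1 / 2 + G) / 2 + 1) / 2 := by
  have hdigamma : Complex.digamma (((1 / 2 + G : ℝ) : ℂ) / 2 + 1)
      = realDigamma ((1 / 2 + G) / 2 + 1) := by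
    rw [← digamma_ofReal (by linarith)]
    push_cast
    rfl
  rw [xiLogDeriv, show (1 / 2 + (G : ℂ)) = ((1 / 2 + G : ℝ) : ℂ) by push_cast; ring,
    logDeriv_xi (by rw [Complex.ofReal_re]; linarith),
    deriv_riemannZeta_div_ofReal (by linarith), hdigamma, ← Complex.ofReal_re (_ + _ / 2)]
  push_cast
  ring_nf

lemma vonMangoldt_mul_rpow_nonneg (n : ℕ) (σ : ℝ) : 0 ≤ Λ n * (n : ℝ) ^ σ :=
  mul_nonneg ArithmeticFunction.vonMangoldt_nonneg (rpow_nonneg n.cast_nonneg σ)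

lemma tsum_vonMangoldt_mul_rpow_le {k : ℕ} {σ : ℝ} (hσ : k + 3 ≤ σ) :
    ∑' n : ℕ, Λ n * (n : ℝ) ^ (-σ) ≤ (1 / 2) ^ k * (π ^ 2 / 6) := by
  have hterm (n : ℕ) : Λ n * (n : ℝ) ^ (-σ) ≤ (1 / 2) ^ k * (1 / (n : ℝ) ^ 2) := by
    rcases lt_or_ge n 2 with h | h
    · interval_cases n <;> simp
    have hn : (2 : ℝ) ≤ n := by exact_mod_cast h
    calc Λ n * (n : ℝ) ^ (-σ) ≤ n * (n : ℝ) ^ (-((k + 3 : ℕ) : ℝ)) := by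
          gcongr
          · exact ArithmeticFunction.vonMangoldt_le_log.trans (log_le_self n.cast_nonneg)
          · linarith
          · push_cast
            linarith
      _ = (1 / n) ^ k * (1 / (n : ℝ) ^ 2) := by
          rw [rpow_neg n.cast_nonneg, rpow_natCast, one_div_pow]
          field
      _ ≤ (1 / 2) ^ k * (1 / (n : ℝ) ^ 2) := by gcongr
  have hsum := hasSum_zeta_two.mul_left ((1 / 2 : ℝ) ^ k)
  rw [← hsum.tsum_eq]
  exact (Summable.of_nonneg_of_le (vonMangoldt_mul_rpow_nonneg · _) hterm
    hsum.summable).tsum_le_tsum hterm hsum.summable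

end ZeroSums

section Numerics

open scoped ArithmeticFunction.vonMangoldt

lemma log_three_gt : 1.09 < log 3 := by
  rw [lt_log_iff_exp_lt (by norm_num)]
  calc exp 1.09 = exp 1 * exp 0.09 := by rw [← exp_add]; norm_num
    _ ≤ 2.7182818286 * (1 / (1 - 0.09)) := by
        gcongr
        · exact exp_one_lt_d9.le
        · exact exp_bound_div_one_sub_of_interval (by norm_num) (by norm_num)
    _ < 3 := by norm_num

lemma log_three_lt_log_pi : log 3 < log π := log_lt_log (by norm_num) pi_gt_three

lemma xiLogDeriv_half_le : xiLogDeriv (1 / 2) ≤ 0.1 := by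
  rw [xiLogDeriv_half, log_mul (by norm_num) pi_ne_zero, show (4 : ℝ) = 2 ^ 2 by norm_num, log_pow]
  push_cast
  linarith [eulerMascheroniConstant_lt_two_thirds, log_two_gt_d9, log_three_gt, log_three_lt_log_pi]

lemma xiLogDeriv_50000_le : xiLogDeriv 50000 ≤ 4.6 := by
  have hdigamma : realDigamma ((1 / 2 + 50000) / 2 + 1) ≤ 10.2 :=
    calc realDigamma ((1 / 2 + 50000) / 2 + 1) ≤ log ((1 / 2 + 50000) / 2 + 1) :=
          realDigamma_le_log (by norm_num)
      _ ≤ log (2 ^ 15 * 0.8) := log_le_log (by norm_num) (by norm_num)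
      _ = 15 * log 2 + log 0.8 := by
          rw [log_mul (by norm_num) (by norm_num), log_pow]
          norm_num
      _ ≤ 10.2 := by
          linarith [log_two_lt_d9, log_le_sub_one_of_pos (show (0 : ℝ) < 0.8 by norm_num)]
  have hΛ : 0 ≤ ∑' n : ℕ, Λ n * (n : ℝ) ^ (-(1 / 2 + 50000 : ℝ)) :=
    tsum_nonneg (vonMangoldt_mul_rpow_nonneg · _)
  rw [xiLogDeriv_eq (by norm_num)]
  linarith [log_three_gt, log_three_lt_log_pi]

lemma le_xiLogDeriv_999 : 2.4 ≤ xiLogDeriv 999.5 := by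
  have hdigamma : 9 * log 2 - 0.025 ≤ realDigamma ((1 / 2 + 999.5) / 2 + 1) :=
    calc 9 * log 2 - 0.025 ≤ log (2 ^ 9) + log (500 / 512) := by
          rw [log_pow]
          linarith [one_sub_inv_le_log_of_pos (show (0 : ℝ) < 500 / 512 by norm_num)]
      _ = log ((1 / 2 + 999.5) / 2) := by
          rw [← log_mul (by norm_num) (by norm_num)]
          norm_num
      _ ≤ realDigamma ((1 / 2 + 999.5) / 2 + 1) := log_le_realDigamma_add_one (by norm_num)
  have hΛ : ∑' n : ℕ, Λ n * (n : ℝ) ^ (-(1 / 2 + 999.5 : ℝ)) ≤ 0.001 :=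
    (tsum_vonMangoldt_mul_rpow_le (k := 20) (by norm_num)).trans
      (by nlinarith [pi_lt_d2, pi_pos])
  have hpi : log π ≤ 2 * log 2 := by
    rw [← Nat.cast_ofNat, ← log_pow]
    exact log_le_log pi_pos (pi_le_four.trans (by norm_num))
  rw [xiLogDeriv_eq (by norm_num)]
  linarith [log_two_gt_d9]

end Numerics

section Laplace

open MeasureTheory

variable {f g : ℝ → ℂ} {A B c : ℝ} {s : ℂ}

/-- The two-sided Laplace transform, through which the explicit formula is proved: both sides of
the formula have the same transform. -/
noncomputable def laplace (f : ℝ → ℂ) (s : ℂ) : ℂ := ∫ u : ℝ, Complex.exp (-s * u) * f u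

/-- Causal continuous functions of exponential growth: those that vanish on the left half-line and
are bounded by `B * exp (c * u)`. Their Laplace transforms converge for `c < re s`. -/
structure HasExpGrowth (f : ℝ → ℂ) (c B : ℝ) : Prop where
  continuous : Continuous f
  eq_zero : ∀ u ≤ 0, f u = 0
  norm_le : ∀ u, ‖f u‖ ≤ B * exp (c * u)

namespace HasExpGrowth

lemma nonneg (h : HasExpGrowth f c B) : 0 ≤ B := by
  simpa using (norm_nonneg _).trans (h.norm_le 0)

lemma add (hf : HasExpGrowth f c A) (hg : HasExpGrowth g c B) :
    HasExpGrowth (fun u ↦ f u + g u) c (A + B) where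
  continuous := hf.continuous.add hg.continuous
  eq_zero u hu := by rw [hf.eq_zero u hu, hg.eq_zero u hu, add_zero]
  norm_le u := by linarith [norm_add_le (f u) (g u), hf.norm_le u, hg.norm_le u]

lemma const_mul (hf : HasExpGrowth f c A) (a : ℂ) :
    HasExpGrowth (fun u ↦ a * f u) c (‖a‖ * A) where
  continuous := continuous_const.mul hf.continuous
  eq_zero u hu := by rw [hf.eq_zero u hu, mul_zero]
  norm_le u := by
    rw [norm_mul, mul_assoc]
    exact mul_le_mul_of_nonneg_left (hf.norm_le u) (norm_nonneg _)

lemma comp_sub_const (hf : HasExpGrowth f c A) {v : ℝ} (hv : 0 ≤ v) :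
    HasExpGrowth (fun u ↦ f (u - v)) c (A * exp (-c * v)) where
  continuous := hf.continuous.comp (continuous_id.sub continuous_const)
  eq_zero u hu := hf.eq_zero _ (by linarith)
  norm_le u := by
    refine (hf.norm_le _).trans_eq ?_
    rw [mul_assoc, ← exp_add]
    ring_nf

lemma norm_exp_mul_le (hf : HasExpGrowth f c B) (s : ℂ) (u : ℝ) :
    ‖Complex.exp (-s * u) * f u‖
      ≤ B * (Ioi (0 : ℝ)).indicator (fun u ↦ exp ((c - s.re) * u)) u := by
  by_cases hu : u ∈ Ioi (0 : ℝ)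
  · calc ‖Complex.exp (-s * u) * f u‖ ≤ exp (-s.re * u) * (B * exp (c * u)) := by
          rw [norm_mul, Complex.norm_exp]
          gcongr
          · simp
          · exact hf.norm_le u
      _ = B * (Ioi (0 : ℝ)).indicator (fun u ↦ exp ((c - s.re) * u)) u := by
          rw [indicator_of_mem hu, mul_left_comm, ← exp_add]
          ring_nf
  · simp [indicator_of_notMem hu, hf.eq_zero u (not_lt.mp hu)]

end HasExpGrowth

lemma integrable_indicator_exp_mul {a : ℝ} (ha : a < 0) :
    Integrable ((Ioi (0 : ℝ)).indicator fun u ↦ exp (a * u)) :=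
  (integrable_indicator_iff measurableSet_Ioi).mpr (integrableOn_exp_mul_Ioi ha 0)

lemma HasExpGrowth.integrable_exp_mul (hf : HasExpGrowth f c B) (hs : c < s.re) :
    Integrable fun u : ℝ ↦ Complex.exp (-s * u) * f u := by
  refine ((integrable_indicator_exp_mul (sub_neg.mpr hs)).const_mul B).mono' ?_
    (Eventually.of_forall (hf.norm_exp_mul_le s))
  have := hf.continuous
  exact Continuous.aestronglyMeasurable (by fun_prop)

lemma laplace_add (hf : HasExpGrowth f c A) (hg : HasExpGrowth g c B) (hs : c < s.re) :
    laplace (fun u ↦ f u + g u) s = laplace f s + laplace g s := by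
  rw [laplace, laplace, laplace,
    ← integral_add (hf.integrable_exp_mul hs) (hg.integrable_exp_mul hs)]
  simp only [mul_add]

lemma laplace_const_mul (f : ℝ → ℂ) (a s : ℂ) :
    laplace (fun u ↦ a * f u) s = a * laplace f s := by
  simp only [laplace, ← integral_const_mul, mul_left_comm]

lemma laplace_comp_sub_const (f : ℝ → ℂ) (v : ℝ) (s : ℂ) :
    laplace (fun u ↦ f (u - v)) s = Complex.exp (-s * v) * laplace f s := by
  rw [laplace, laplace, ← integral_const_mul, ← integral_sub_right_eq_self
    (fun u : ℝ ↦ Complex.exp (-s * v) * (Complex.exp (-s * u) * f u)) v]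
  congr 1 with u
  rw [← mul_assoc, ← Complex.exp_add]
  push_cast
  ring_nf

section Series

variable {ι : Type*} {F : ι → ℝ → ℂ} {b : ι → ℝ}

lemma summable_of_hasExpGrowth (h : ∀ i, HasExpGrowth (F i) c (b i)) (hb : Summable b) (u : ℝ) :
    Summable fun i ↦ F i u :=
  (hb.mul_right _).of_norm_bounded fun i ↦ (h i).norm_le u

lemma hasExpGrowth_tsum (h : ∀ i, HasExpGrowth (F i) c (b i)) (hb : Summable b) :
    HasExpGrowth (fun u ↦ ∑' i, F i u) c (∑' i, b i) where
  continuous := continuous_iff_continuousAt.mpr fun u ↦ by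
    have hon : ContinuousOn (fun u ↦ ∑' i, F i u) (Metric.ball 0 (|u| + 1)) := by
      refine continuousOn_tsum (fun i ↦ (h i).continuous.continuousOn)
        (hb.mul_right (exp (|c| * (|u| + 1)))) fun i v hv ↦ ((h i).norm_le v).trans ?_
      have hv : |v| ≤ |u| + 1 := by simpa using (mem_ball_zero_iff.mp hv).le
      refine mul_le_mul_of_nonneg_left (exp_le_exp.mpr ?_) (h i).nonneg
      calc c * v ≤ |c| * |v| := (le_abs_self _).trans_eq (abs_mul c v)
        _ ≤ |c| * (|u| + 1) := by gcongr
    exact hon.continuousAt (Metric.isOpen_ball.mem_nhds (by simp))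
  eq_zero u hu := by simp [(h _).eq_zero u hu]
  norm_le u := by
    rw [← tsum_mul_right]
    exact tsum_of_norm_bounded (hb.mul_right _).hasSum fun i ↦ (h i).norm_le u

lemma hasSum_laplace_tsum (h : ∀ i, HasExpGrowth (F i) c (b i)) (hb : Summable b)
    (hs : c < s.re) :
    HasSum (fun i ↦ laplace (F i) s) (laplace (fun u ↦ ∑' i, F i u) s) := by
  have hzero {i : ι} (hi : i ∉ Function.support b) : F i = 0 := by
    funext u
    simpa [Function.notMem_support.mp hi] using (h i).norm_le u
  have : Countable (Function.support b) := hb.countable_support.to_subtype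
  have hnorm : Summable fun i : Function.support b ↦
      ∫ u : ℝ, ‖Complex.exp (-s * u) * F i u‖ := by
    have hint := integrable_indicator_exp_mul (sub_neg.mpr hs)
    refine Summable.of_nonneg_of_le (fun i ↦ integral_nonneg fun u ↦ norm_nonneg _) (fun i ↦ ?_)
      ((hb.subtype _).mul_right (∫ u, (Ioi (0 : ℝ)).indicator (fun u ↦ exp ((c - s.re) * u)) u))
    rw [← integral_const_mul]
    exact integral_mono ((h i).integrable_exp_mul hs).norm (hint.const_mul _)
      ((h i).norm_exp_mul_le s)
  have hsum := hasSum_integral_of_summable_integral_norm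
    (fun i : Function.support b ↦ (h i).integrable_exp_mul hs) hnorm
  have htsum (u : ℝ) : ∑' i : Function.support b, F i u = ∑' i, F i u :=
    tsum_subtype_eq_of_support_subset (f := fun i ↦ F i u) fun i hi ↦
      not_imp_comm.mp (fun hib ↦ congrFun (hzero hib) u) hi
  simp only [tsum_mul_left, htsum] at hsum
  exact (hasSum_subtype_iff_of_support_subset (f := fun i ↦ laplace (F i) s) fun i hi ↦
    not_imp_comm.mp (fun hib ↦ by simp [laplace, hzero hib]) hi).mp hsum

end Series

theorem eq_of_laplace_eq (hf : HasExpGrowth f c A) (hg : HasExpGrowth g c B) {σ : ℝ} (hσ : c < σ)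
    (h : ∀ s : ℂ, s.re = σ → laplace f s = laplace g s) : f = g := by
  have hsub := hf.add (hg.const_mul (-1))
  set k : ℝ → ℂ := fun u ↦ Complex.exp (-σ * u) * (f u + -1 * g u) with hk
  have hcont : Continuous k := by
    have := hsub.continuous
    fun_prop
  have hint : Integrable k := hsub.integrable_exp_mul (s := σ) (by simpa using hσ)
  have hfourier : FourierTransform.fourier k = fun _ ↦ (0 : ℂ) := by
    funext w
    set s : ℂ := σ + 2 * π * w * Complex.I
    have hre : s.re = σ := by simp [s]
    calc FourierTransform.fourier k w = laplace (fun u ↦ f u + -1 * g u) s := by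
          rw [fourier_real_eq_integral_exp_smul, laplace]
          congr 1 with u
          rw [smul_eq_mul, hk, ← mul_assoc, ← Complex.exp_add]
          push_cast [s]
          ring_nf
      _ = 0 := by
          rw [laplace_add hf (hg.const_mul (-1)) (hre ▸ hσ), laplace_const_mul, h s hre]
          ring
  have hinv := hcont.fourierInv_fourier_eq hint (hfourier ▸ integrable_zero _ _ _)
  funext u
  have hku : k u = 0 := by
    rw [← hinv, hfourier, fourierInv_eq]
    simp
  have := (mul_eq_zero.mp hku).resolve_left (Complex.exp_ne_zero _)
  linear_combination this

end Laplace

section ExplicitFormula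

open scoped ArithmeticFunction.vonMangoldt

variable {μ u : ℝ} {s : ℂ}

/-- The contribution `x ^ (-μ) * ∫ t in 1..x, t ^ (a + μ - 1)` of a pole at `a` to the weighted mean
of `ψ`, as a function of `u = log x`. It is set to `0` for `u ≤ 0`. -/
noncomputable def poleTerm (μ : ℝ) (a : ℂ) (u : ℝ) : ℂ :=
  (Complex.exp (a * (max u 0 : ℝ)) - Complex.exp (-μ * (max u 0 : ℝ))) / (a + μ)

lemma poleTerm_of_nonpos (μ : ℝ) (a : ℂ) (hu : u ≤ 0) : poleTerm μ a u = 0 := by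
  simp [poleTerm, max_eq_right hu]

lemma norm_poleTerm_le {a : ℂ} {c : ℝ} (ha : a.re ≤ c) (hμ : -μ ≤ c) (hu : 0 ≤ u) :
    ‖poleTerm μ a u‖ ≤ 2 / ‖a + μ‖ * exp (c * u) := by
  rw [poleTerm, max_eq_left hu, norm_div, div_mul_eq_mul_div]
  gcongr
  refine (norm_sub_le _ _).trans ?_
  rw [two_mul, Complex.norm_exp, Complex.norm_exp]
  gcongr
  · simpa using mul_le_mul_of_nonneg_right ha hu
  · simpa using mul_le_mul_of_nonneg_right hμ hu

lemma hasExpGrowth_poleTerm {a : ℂ} {c : ℝ} (ha : a.re ≤ c) (hμ : -μ ≤ c) :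
    HasExpGrowth (poleTerm μ a) c (2 / ‖a + μ‖) where
  continuous := by unfold poleTerm; fun_prop
  eq_zero u := poleTerm_of_nonpos μ a
  norm_le u := by
    rcases le_total u 0 with hu | hu
    · rw [poleTerm_of_nonpos μ a hu, norm_zero]
      positivity
    · exact norm_poleTerm_le ha hμ hu

lemma laplace_poleTerm {a : ℂ} (ha : a.re < s.re) (hμ : -μ < s.re) (haμ : a + μ ≠ 0) :
    laplace (poleTerm μ a) s = 1 / ((s - a) * (s + μ)) := by
  have ha' : (a - s).re < 0 := by simpa using ha
  have hμ' : (-μ - s).re < 0 := by simpa using hμ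
  have has : a - s ≠ 0 := fun h ↦ by simp [h] at ha'
  have hμs : -μ - s ≠ 0 := fun h ↦ by simp [h] at hμ'
  have hIoi : laplace (poleTerm μ a) s = ∫ u in Ioi (0 : ℝ),
      1 / (a + μ) * (Complex.exp ((a - s) * u) - Complex.exp ((-μ - s) * u)) := by
    rw [laplace, ← MeasureTheory.integral_indicator measurableSet_Ioi]
    congr 1 with u
    by_cases hu : u ∈ Ioi (0 : ℝ)
    · rw [indicator_of_mem hu, poleTerm, max_eq_left hu.out.le, sub_mul, sub_mul, Complex.exp_sub,
        Complex.exp_sub, neg_mul s, Complex.exp_neg]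
      ring
    · rw [indicator_of_notMem hu, poleTerm_of_nonpos μ a (not_lt.mp hu), mul_zero]
  rw [hIoi, MeasureTheory.integral_const_mul, MeasureTheory.integral_sub
    (integrableOn_exp_mul_complex_Ioi ha' 0) (integrableOn_exp_mul_complex_Ioi hμ' 0),
    integral_exp_mul_complex_Ioi ha', integral_exp_mul_complex_Ioi hμ']
  have has' : s - a ≠ 0 := sub_ne_zero.mpr (sub_ne_zero.mp has).symm
  have hμs' : s + μ ≠ 0 := fun h ↦ hμs (by linear_combination -h)
  simp only [Complex.ofReal_zero, mul_zero, Complex.exp_zero]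
  field_simp
  ring

/-- The weighted mean `x ^ (-μ) * ∫ t in 1..x, ψ t * t ^ (μ - 1)` at `x = exp u`, as a sum over
prime powers. -/
noncomputable def primeSum (μ u : ℝ) : ℂ :=
  ∑' n : ℕ, (Λ n : ℂ) * poleTerm μ 0 (u - log n)

/-- The contribution of the nontrivial zeros to the explicit formula. -/
noncomputable def zeroSum (μ u : ℝ) : ℂ := ∑' ρ : ℂ, (zeroMult ρ / ρ) * poleTerm μ ρ u

/-- The contribution of the trivial zeros `-2 * (n + 1)` to the explicit formula. -/
noncomputable def trivialZeroSum (μ u : ℝ) : ℂ :=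
  ∑' n : ℕ, 1 / (2 * ((n : ℂ) + 1)) * poleTerm μ (-2 * (n + 1)) u

lemma hasExpGrowth_primeSum_term (hμ : 0 ≤ μ) (n : ℕ) :
    HasExpGrowth (fun u ↦ (Λ n : ℂ) * poleTerm μ 0 (u - log n)) (3 / 2)
      (‖(Λ n : ℂ)‖ * (2 / ‖(0 : ℂ) + μ‖ * exp (-(3 / 2) * log n))) :=
  ((hasExpGrowth_poleTerm (by norm_num) (by linarith)).comp_sub_const
    (log_natCast_nonneg n)).const_mul _

lemma summable_primeSum_bound (μ : ℝ) :
    Summable fun n : ℕ ↦ ‖(Λ n : ℂ)‖ * (2 / ‖(0 : ℂ) + μ‖ * exp (-(3 / 2) * log n)) := by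
  have h := (ArithmeticFunction.LSeriesSummable_vonMangoldt (s := ((3 / 2 : ℝ) : ℂ))
    (by rw [Complex.ofReal_re]; norm_num)).norm
  refine (h.mul_left (2 / ‖(0 : ℂ) + μ‖)).congr fun n ↦ ?_
  rcases eq_or_ne n 0 with rfl | hn
  · simp
  · rw [LSeries.term_of_ne_zero hn, norm_div,
      Complex.norm_natCast_cpow_of_pos (Nat.pos_of_ne_zero hn), Complex.ofReal_re,
      rpow_def_of_pos (by positivity), neg_mul, exp_neg, mul_comm (log n)]
    ring

lemma exists_hasExpGrowth_primeSum (hμ : 0 ≤ μ) : ∃ B, HasExpGrowth (primeSum μ) (3 / 2) B :=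
  ⟨_, hasExpGrowth_tsum (hasExpGrowth_primeSum_term hμ) (summable_primeSum_bound μ)⟩

lemma laplace_primeSum (hμ : 0 < μ) (hs : 3 / 2 < s.re) :
    laplace (primeSum μ) s = -(deriv riemannZeta s / riemannZeta s) / (s * (s + μ)) := by
  have hsum := hasSum_laplace_tsum (hasExpGrowth_primeSum_term hμ.le) (summable_primeSum_bound μ) hs
  rw [← neg_div, ← ArithmeticFunction.LSeries_vonMangoldt_eq_deriv_riemannZeta_div (by linarith),
    LSeries, div_eq_mul_inv, ← tsum_mul_right]
  refine hsum.tsum_eq.symm.trans (tsum_congr fun n ↦ ?_)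
  rw [laplace_const_mul, laplace_comp_sub_const,
    laplace_poleTerm (by rw [Complex.zero_re]; linarith) (by linarith) (by simpa using hμ.ne')]
  rcases eq_or_ne n 0 with rfl | hn
  · simp
  · rw [LSeries.term_of_ne_zero hn, Complex.cpow_def_of_ne_zero (by exact_mod_cast hn), neg_mul,
      Complex.exp_neg, ← Complex.natCast_log, mul_comm ((log n : ℝ) : ℂ), sub_zero]
    ring

lemma hasExpGrowth_zeroSum_term (hRH : RiemannHypothesis) (hμ : 0 ≤ μ) (ρ : ℂ) :
    HasExpGrowth (fun u ↦ (zeroMult ρ / ρ) * poleTerm μ ρ u) (3 / 2)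
      (‖(zeroMult ρ / ρ : ℂ)‖ * (2 / ‖ρ + μ‖)) := by
  by_cases h : xi ρ = 0
  · refine (hasExpGrowth_poleTerm ?_ (by linarith)).const_mul _
    rw [re_eq_half_of_xi_eq_zero hRH h]
    norm_num
  · simpa [zeroMult_eq_zero h] using ⟨continuous_const, by simp, by simp⟩

lemma one_le_abs_re_neg_sub_half (hμ : 1 ≤ μ) : 1 ≤ |(-(μ : ℂ)).re - 1 / 2| := by
  rw [Complex.neg_re, Complex.ofReal_re, abs_of_neg (by linarith)]
  linarith

lemma summable_zeroSum_bound (hRH : RiemannHypothesis) (hμ : 1 ≤ μ) :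
    Summable fun ρ ↦ ‖(zeroMult ρ / ρ : ℂ)‖ * (2 / ‖ρ + μ‖) := by
  refine ((summable_zeroMult_div_norm_mul_norm_sub hRH
    (one_le_abs_re_neg_sub_half hμ)).mul_left 2).congr fun ρ ↦ ?_
  rw [norm_div, Complex.norm_of_nonneg (zeroMult_nonneg ρ), ← neg_add', norm_neg, add_comm (μ : ℂ)]
  ring

lemma hasSum_zeroSum (hRH : RiemannHypothesis) (hμ : 1 ≤ μ) (u : ℝ) :
    HasSum (fun ρ : ℂ ↦ (zeroMult ρ / ρ) * poleTerm μ ρ u) (zeroSum μ u) :=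
  (summable_of_hasExpGrowth (hasExpGrowth_zeroSum_term hRH (by linarith))
    (summable_zeroSum_bound hRH hμ) u).hasSum

lemma exists_hasExpGrowth_zeroSum (hRH : RiemannHypothesis) (hμ : 1 ≤ μ) :
    ∃ B, HasExpGrowth (zeroSum μ) (3 / 2) B :=
  ⟨_, hasExpGrowth_tsum (hasExpGrowth_zeroSum_term hRH (by linarith))
    (summable_zeroSum_bound hRH hμ)⟩

lemma laplace_zeroSum (hRH : RiemannHypothesis) (hμ : 1 ≤ μ) (hs : 3 / 2 < s.re) :
    laplace (zeroSum μ) s = (logDeriv xi s - logDeriv xi 0) / (s * (s + μ)) := by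
  have hsum := hasSum_laplace_tsum (hasExpGrowth_zeroSum_term hRH (by linarith))
    (summable_zeroSum_bound hRH hμ) hs
  have hxi := hasSum_logDeriv_xi hRH (s := s) (by rw [abs_of_pos] <;> linarith)
  refine hsum.unique ((hxi.div_const (s * (s + μ))).congr_fun fun ρ ↦ ?_)
  by_cases h : xi ρ = 0
  · have hre := re_eq_half_of_xi_eq_zero hRH h
    have hs0 : s ≠ 0 := Complex.ne_zero_of_one_lt_re (by linarith)
    rw [laplace_const_mul, laplace_poleTerm (by linarith) (by linarith)
      (fun h ↦ by have := congrArg Complex.re h; simp [hre] at this; linarith)]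
    field
  · simp [zeroMult_eq_zero h, laplace]

/-- `-μ` has distance at least `1` from the trivial zeros, so that the corresponding terms of the
explicit formula have no small denominators. -/
def AvoidsTrivialZeros (μ : ℝ) : Prop := ∀ n : ℕ, 1 ≤ |μ - 2 * ((n : ℝ) + 1)|

lemma avoidsTrivialZeros_of_odd {n : ℕ} (hn : Odd n) : AvoidsTrivialZeros n := by
  intro k
  have : (1 : ℤ) ≤ |(n : ℤ) - 2 * ((k : ℤ) + 1)| := Int.one_le_abs (by grind)
  exact_mod_cast this

lemma norm_trivialZero_add (μ : ℝ) (n : ℕ) :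
    ‖(-2 * ((n : ℂ) + 1) + μ : ℂ)‖ = |μ - 2 * ((n : ℝ) + 1)| := by
  rw [← norm_eq_abs, ← Complex.norm_real]
  push_cast
  ring_nf

lemma trivialZeroSum_bound_le (hμ : 1 ≤ μ) (h : AvoidsTrivialZeros μ) (n : ℕ) :
    ‖(1 / (2 * ((n : ℂ) + 1)) : ℂ)‖ * (2 / ‖(-2 * ((n : ℂ) + 1) + μ : ℂ)‖)
      ≤ (1 + μ) / 2 * (1 / ((n : ℝ) + 1) ^ 2) := by
  have hnorm : ‖(1 / (2 * ((n : ℂ) + 1)) : ℂ)‖ = 1 / (2 * (n + 1)) := by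
    rw [← Nat.cast_add_one, norm_div, norm_mul, Complex.norm_natCast]
    simp
  rw [norm_trivialZero_add, hnorm]
  have hn := h n
  set d := |μ - 2 * ((n : ℝ) + 1)|
  have hle : 2 * ((n : ℝ) + 1) ≤ d * (1 + μ) := by
    have : 2 * ((n : ℝ) + 1) - μ ≤ d := (neg_sub _ _).symm.trans_le (neg_le_abs _)
    nlinarith
  calc 1 / (2 * ((n : ℝ) + 1)) * (2 / d) = 2 * (n + 1) / (2 * (n + 1) ^ 2 * d) := by field
    _ ≤ d * (1 + μ) / (2 * (n + 1) ^ 2 * d) := by gcongr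
    _ = (1 + μ) / 2 * (1 / ((n : ℝ) + 1) ^ 2) := by field

lemma trivialZero_re_nonpos (n : ℕ) : (-2 * ((n : ℂ) + 1)).re ≤ 0 := by
  have : (-2 * ((n : ℂ) + 1)).re = -2 * ((n : ℝ) + 1) := by simp
  rw [this]
  linarith [n.cast_nonneg (α := ℝ)]

lemma hasExpGrowth_trivialZeroSum_term (hμ : 0 ≤ μ) (n : ℕ) :
    HasExpGrowth (fun u ↦ 1 / (2 * ((n : ℂ) + 1)) * poleTerm μ (-2 * (n + 1)) u) (3 / 2)
      (‖(1 / (2 * ((n : ℂ) + 1)) : ℂ)‖ * (2 / ‖(-2 * ((n : ℂ) + 1) + μ : ℂ)‖)) :=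
  (hasExpGrowth_poleTerm ((trivialZero_re_nonpos n).trans (by norm_num)) (by linarith)).const_mul _

lemma summable_trivialZeroSum_bound (hμ : 1 ≤ μ) (h : AvoidsTrivialZeros μ) :
    Summable fun n : ℕ ↦
      ‖(1 / (2 * ((n : ℂ) + 1)) : ℂ)‖ * (2 / ‖(-2 * ((n : ℂ) + 1) + μ : ℂ)‖) :=
  Summable.of_nonneg_of_le (fun n ↦ by positivity) (trivialZeroSum_bound_le hμ h)
    (summable_one_div_natCast_add_one_sq.mul_left _)

lemma exists_hasExpGrowth_trivialZeroSum (hμ : 1 ≤ μ) (h : AvoidsTrivialZeros μ) :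
    ∃ B, HasExpGrowth (trivialZeroSum μ) (3 / 2) B :=
  ⟨_, hasExpGrowth_tsum (hasExpGrowth_trivialZeroSum_term (by linarith))
    (summable_trivialZeroSum_bound hμ h)⟩

lemma laplace_trivialZeroSum (hμ : 1 ≤ μ) (h : AvoidsTrivialZeros μ) (hs : 3 / 2 < s.re) :
    laplace (trivialZeroSum μ) s =
      (Complex.digamma (s / 2 + 1) + eulerMascheroniConstant) / (2 * s * (s + μ)) := by
  have hsum := hasSum_laplace_tsum (hasExpGrowth_trivialZeroSum_term (by linarith))
    (summable_trivialZeroSum_bound hμ h) hs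
  have hdigamma := hasSum_digamma (s := s / 2) (by simp; linarith)
  refine hsum.unique ((hdigamma.div_const (2 * s * (s + μ))).congr_fun fun n ↦ ?_)
  have hs0 : s ≠ 0 := Complex.ne_zero_of_one_lt_re (by linarith)
  rw [laplace_const_mul, laplace_poleTerm ((trivialZero_re_nonpos n).trans_lt (by linarith))
    (by linarith) (norm_pos_iff.mp (by linarith [norm_trivialZero_add μ n, h n])),
    show s - -2 * ((n : ℂ) + 1) = 2 * (n + 1 + s / 2) by ring]
  field

lemma norm_trivialZeroSum_le (hμ : 1 ≤ μ) (h : AvoidsTrivialZeros μ) (hu : 0 ≤ u) :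
    ‖trivialZeroSum μ u‖ ≤ (1 + μ) / 2 * (π ^ 2 / 6) := by
  have hzeta : HasSum (fun n : ℕ ↦ 1 / ((n : ℝ) + 1) ^ 2) (π ^ 2 / 6) := by
    simpa using (hasSum_nat_add_iff' 1).mpr hasSum_zeta_two
  refine tsum_of_norm_bounded (hzeta.mul_left _) fun n ↦
    le_trans ?_ (trivialZeroSum_bound_le hμ h n)
  rw [norm_mul]
  gcongr
  simpa using norm_poleTerm_le (trivialZero_re_nonpos n) (by linarith : -μ ≤ 0) hu

theorem explicit_formula (hRH : RiemannHypothesis) (hμ : 1 ≤ μ) (h : AvoidsTrivialZeros μ)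
    (u : ℝ) :
    primeSum μ u = poleTerm μ 1 u - zeroSum μ u - log (2 * π) * poleTerm μ 0 u
      + trivialZeroSum μ u := by
  obtain ⟨_, hP⟩ := exists_hasExpGrowth_primeSum (zero_le_one.trans hμ)
  obtain ⟨_, hZ⟩ := exists_hasExpGrowth_zeroSum hRH hμ
  obtain ⟨_, hT⟩ := exists_hasExpGrowth_trivialZeroSum hμ h
  have hE₀ := hasExpGrowth_poleTerm (μ := μ) (a := 0) (c := 3 / 2) (by norm_num) (by linarith)
  have hE₁ := hasExpGrowth_poleTerm (μ := μ) (a := 1) (c := 3 / 2) (by norm_num) (by linarith)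
  have hZ' := hZ.const_mul (-1)
  have hE₀' := hE₀.const_mul (-(log (2 * π) : ℂ))
  rw [congrFun (eq_of_laplace_eq hP (((hE₁.add hZ').add hE₀').add hT) (σ := 2) (by norm_num)
    fun s hs ↦ ?_) u]
  · ring
  have hs' : 3 / 2 < s.re := by rw [hs]; norm_num
  have h1 : (1 : ℂ) + μ ≠ 0 := by
    exact_mod_cast (by positivity : (0 : ℝ) < 1 + μ).ne'
  rw [laplace_add ((hE₁.add hZ').add hE₀') hT hs', laplace_add (hE₁.add hZ') hE₀' hs',
    laplace_add hE₁ hZ' hs', laplace_const_mul, laplace_const_mul,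
    laplace_primeSum (by linarith) hs', laplace_zeroSum hRH hμ hs', laplace_trivialZeroSum hμ h hs',
    laplace_poleTerm (by simp; linarith) (by linarith) h1,
    laplace_poleTerm (by simp; linarith) (by linarith) (by simp; linarith), logDeriv_xi_zero,
    logDeriv_xi (by linarith), xiLogDeriv_half, log_mul two_ne_zero pi_ne_zero,
    log_mul four_ne_zero pi_ne_zero, show (4 : ℝ) = 2 ^ 2 by norm_num, log_pow]
  have hs0 : s ≠ 0 := Complex.ne_zero_of_one_lt_re (by linarith)
  have hs1 : s - 1 ≠ 0 := sub_ne_zero.mpr (ne_one_of_one_lt_re (by linarith))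
  have hsμ : s + μ ≠ 0 := fun h ↦ by
    have := congrArg Complex.re h
    simp [hs] at this
    linarith
  push_cast
  rw [sub_zero]
  field_simp
  ring

end ExplicitFormula

section PsiErrorMoment

open Chebyshev
open scoped ArithmeticFunction.vonMangoldt

variable {μ G δ x : ℝ} {m : ℕ}

/-- The weighted integral `∫ t in 1..x, (ψ t - t) * t ^ m` of the error term of the prime number
theorem. A large `m` concentrates the weight near `x`. -/
noncomputable def psiErrorMoment (m : ℕ) (x : ℝ) : ℝ := ∫ t in (1 : ℝ)..x, (ψ t - t) * t ^ m

lemma intervalIntegrable_psi (a b : ℝ) :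
    IntervalIntegrable ψ MeasureTheory.volume a b :=
  psi_mono.intervalIntegrable

lemma intervalIntegrable_psi_mul_pow (m : ℕ) (a b : ℝ) :
    IntervalIntegrable (fun t ↦ ψ t * t ^ m) MeasureTheory.volume a b :=
  (intervalIntegrable_psi a b).mul_continuousOn (by fun_prop)

lemma poleTerm_log (μ : ℝ) (a : ℂ) (hx : 1 ≤ x) :
    poleTerm μ a (log x) = ((x : ℂ) ^ a - (x : ℂ) ^ (-μ : ℂ)) / (a + μ) := by
  have hx0 : (x : ℂ) ≠ 0 := by exact_mod_cast (by linarith : x ≠ 0)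
  rw [poleTerm, max_eq_left (log_nonneg hx), Complex.cpow_def_of_ne_zero hx0,
    Complex.cpow_def_of_ne_zero hx0, Complex.ofReal_log (by linarith), mul_comm a,
    mul_comm (-μ : ℂ)]

lemma sum_pow_mul_vonMangoldt (m : ℕ) (hx : 1 ≤ x) :
    ∑ n ∈ Finset.Icc 0 ⌊x⌋₊, (n : ℝ) ^ (m + 1) * Λ n =
      x ^ (m + 1) * ψ x - (m + 1) * ∫ t in (1 : ℝ)..x, ψ t * t ^ m := by
  have hderiv : deriv (fun t : ℝ ↦ t ^ (m + 1)) = fun t ↦ (m + 1 : ℝ) * t ^ m := by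
    funext t
    simp
  rw [sum_mul_eq_sub_integral_mul₀ (f := fun t : ℝ ↦ t ^ (m + 1)) (c := fun n ↦ Λ n) (by simp) x
    (fun t _ ↦ by fun_prop)
    (hderiv ▸ (Continuous.continuousOn (by fun_prop)).integrableOn_Icc), hderiv,
    psi_eq_sum_Icc, intervalIntegral.integral_of_le hx, ← MeasureTheory.integral_const_mul]
  simp only [psi_eq_sum_Icc]
  congr 2 with t
  ring

lemma primeSum_log_eq_sum (m : ℕ) (hx : 1 ≤ x) :
    primeSum (m + 1 : ℕ) (log x) =
      ((∑ n ∈ Finset.Icc 0 ⌊x⌋₊, Λ n * ((1 - (n / x) ^ (m + 1)) / (m + 1)) : ℝ) : ℂ) := by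
  rw [primeSum, tsum_eq_sum (s := Finset.Icc 0 ⌊x⌋₊), Complex.ofReal_sum]
  · refine Finset.sum_congr rfl fun n hn ↦ ?_
    rcases n.eq_zero_or_pos with rfl | hn0
    · simp
    have hnx : (n : ℝ) ≤ x := (Nat.le_floor_iff (by linarith)).mp (Finset.mem_Icc.mp hn).2
    have hn0 : (0 : ℝ) < n := by exact_mod_cast hn0
    have hdiv : 1 ≤ x / n := (one_le_div hn0).mpr hnx
    rw [← log_div (by linarith) hn0.ne', poleTerm_log _ _ hdiv, ← Complex.ofReal_neg,
      ← Complex.ofReal_cpow (by positivity), rpow_neg (by positivity), rpow_natCast, ← inv_pow,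
      inv_div]
    push_cast
    rw [Complex.cpow_zero, zero_add]
  · intro n hn
    have hxn : x < n := (Nat.floor_lt (by linarith)).mp (by simpa using hn)
    rw [poleTerm_of_nonpos _ _ (sub_nonpos.mpr (log_le_log (by linarith) hxn.le)), mul_zero]

lemma primeSum_log (m : ℕ) (hx : 1 ≤ x) :
    primeSum (m + 1 : ℕ) (log x) =
      (((x ^ (m + 1))⁻¹ * ∫ t in (1 : ℝ)..x, ψ t * t ^ m : ℝ) : ℂ) := by
  rw [primeSum_log_eq_sum m hx]
  congr 1
  calc ∑ n ∈ Finset.Icc 0 ⌊x⌋₊, Λ n * ((1 - (n / x) ^ (m + 1)) / (m + 1))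
    _ = (ψ x - (x ^ (m + 1))⁻¹ * ∑ n ∈ Finset.Icc 0 ⌊x⌋₊, (n : ℝ) ^ (m + 1) * Λ n) / (m + 1) := by
      rw [psi_eq_sum_Icc, Finset.mul_sum, ← Finset.sum_sub_distrib, Finset.sum_div]
      exact Finset.sum_congr rfl fun n _ ↦ by ring
    _ = (x ^ (m + 1))⁻¹ * ∫ t in (1 : ℝ)..x, ψ t * t ^ m := by
      rw [sum_pow_mul_vonMangoldt m hx]
      field

lemma poleTerm_one_log (m : ℕ) (hx : 1 ≤ x) :
    poleTerm (m + 1 : ℕ) 1 (log x) =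
      (((x ^ (m + 1))⁻¹ * ∫ t in (1 : ℝ)..x, t * t ^ m : ℝ) : ℂ) := by
  simp only [← pow_succ']
  rw [poleTerm_log _ _ hx, integral_pow, Complex.cpow_one, Complex.ofReal_natCast,
    Complex.cpow_neg, Complex.cpow_natCast]
  have hx0 : (x : ℂ) ≠ 0 := by exact_mod_cast (by linarith : x ≠ 0)
  have hm : (m : ℂ) + 1 + 1 ≠ 0 := by
    exact_mod_cast (by positivity : (m : ℝ) + 1 + 1 ≠ 0)
  push_cast
  rw [add_comm (1 : ℂ), one_pow]
  field

/-- The terms of the explicit formula that stay bounded: those of the pole at `0` and of the trivial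
zeros. -/
noncomputable def boundedTerm (μ u : ℝ) : ℂ := trivialZeroSum μ u - log (2 * π) * poleTerm μ 0 u

lemma norm_boundedTerm_le {u : ℝ} (hμ : 1 ≤ μ) (h : AvoidsTrivialZeros μ) (hu : 0 ≤ u) :
    ‖boundedTerm μ u‖ ≤ μ + 7 := by
  have htrivial : ‖trivialZeroSum μ u‖ ≤ 1 + μ := by
    have := norm_trivialZeroSum_le hμ h hu
    have hpi : π ^ 2 / 6 ≤ 2 := by nlinarith [pi_lt_d2, pi_pos]
    nlinarith
  have hpole : ‖poleTerm μ 0 u‖ ≤ 2 := by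
    refine (norm_poleTerm_le Complex.zero_re.le (by linarith) hu).trans ?_
    rw [zero_mul, exp_zero, mul_one, zero_add, Complex.norm_of_nonneg (by linarith)]
    exact div_le_self (by norm_num) hμ
  have hlog : ‖(log (2 * π) : ℂ)‖ ≤ 3 := by
    have h8 : log (2 * π) ≤ 3 * log 2 := by
      rw [← log_rpow two_pos]
      exact log_le_log (by positivity) (by norm_num; linarith [pi_le_four])
    rw [Complex.norm_of_nonneg (log_nonneg (by linarith [two_le_pi]))]
    linarith [log_two_lt_d9]
  calc ‖boundedTerm μ u‖ ≤ ‖trivialZeroSum μ u‖ + ‖(log (2 * π) : ℂ)‖ * ‖poleTerm μ 0 u‖ :=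
        (norm_sub_le _ _).trans_eq (by rw [norm_mul])
    _ ≤ (1 + μ) + 3 * 2 := by gcongr
    _ = μ + 7 := by ring

theorem psiErrorMoment_eq (hRH : RiemannHypothesis) (hm : Even m) (hx : 1 ≤ x) :
    (((x ^ (m + 1))⁻¹ * psiErrorMoment m x : ℝ) : ℂ) =
      boundedTerm (m + 1 : ℕ) (log x) - zeroSum (m + 1 : ℕ) (log x) := by
  have h := explicit_formula hRH (by simp) (avoidsTrivialZeros_of_odd hm.add_one) (log x)
  have hsub : psiErrorMoment m x =
      (∫ t in (1 : ℝ)..x, ψ t * t ^ m) - ∫ t in (1 : ℝ)..x, t * t ^ m := by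
    simp only [psiErrorMoment, sub_mul]
    exact intervalIntegral.integral_sub (intervalIntegrable_psi_mul_pow m 1 x)
      (Continuous.intervalIntegrable (by fun_prop) _ _)
  rw [primeSum_log m hx, poleTerm_one_log m hx] at h
  rw [hsub, boundedTerm]
  push_cast at h ⊢
  linear_combination h

lemma norm_ofReal_cpow_mul_I (hx : 1 ≤ x) (γ : ℝ) : ‖(x : ℂ) ^ (γ * Complex.I)‖ = 1 := by
  simp [Complex.norm_cpow_eq_rpow_re_of_pos (by linarith : 0 < x)]

lemma poleTerm_log_of_xi_eq_zero (hRH : RiemannHypothesis) (μ : ℝ) {ρ : ℂ} (h : xi ρ = 0)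
    (hx : 1 ≤ x) :
    poleTerm μ ρ (log x) =
      (√x * (x : ℂ) ^ (ρ.im * Complex.I) - (x ^ (-μ) : ℝ)) / (ρ + μ) := by
  have hx0 : (x : ℂ) ≠ 0 := by exact_mod_cast (by linarith : x ≠ 0)
  rw [poleTerm_log μ ρ hx]
  nth_rw 1 [← Complex.re_add_im ρ]
  rw [re_eq_half_of_xi_eq_zero hRH h, Complex.cpow_add _ _ hx0, sqrt_eq_rpow,
    Complex.ofReal_cpow (by linarith), Complex.ofReal_cpow (by linarith), Complex.ofReal_neg]

lemma norm_le_norm_add_of_xi_eq_zero (hRH : RiemannHypothesis) (hμ : 0 ≤ μ) {ρ : ℂ}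
    (h : xi ρ = 0) : ‖ρ‖ ≤ ‖ρ + μ‖ := by
  rw [Complex.norm_def, Complex.norm_def, Complex.normSq_apply, Complex.normSq_apply]
  apply sqrt_le_sqrt
  simp only [re_eq_half_of_xi_eq_zero hRH h, Complex.add_re, Complex.add_im, Complex.ofReal_re,
    Complex.ofReal_im]
  nlinarith

lemma norm_zeroSum_log_le (hRH : RiemannHypothesis) (hμ : 1 ≤ μ) (hx : 1 ≤ x) :
    ‖zeroSum μ (log x)‖ ≤ 2 * xiLogDeriv (1 / 2) * (√x + 1) := by
  refine tsum_of_norm_bounded ((hasSum_zeroMult_div_norm_sq hRH).mul_right _) fun ρ ↦ ?_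
  by_cases h : xi ρ = 0
  · have hpole : ‖poleTerm μ ρ (log x)‖ ≤ (√x + 1) / ‖ρ + μ‖ := by
      rw [poleTerm_log_of_xi_eq_zero hRH μ h hx, norm_div]
      gcongr
      refine (norm_sub_le _ _).trans (add_le_add ?_ ?_)
      · rw [norm_mul, norm_ofReal_cpow_mul_I hx, Complex.norm_of_nonneg (sqrt_nonneg x), mul_one]
      · rw [Complex.norm_of_nonneg (by positivity)]
        exact rpow_le_one_of_one_le_of_nonpos hx (by linarith)
    have hρ : 0 < ‖ρ‖ := norm_pos_iff.mpr (ne_zero_of_xi_eq_zero h)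
    have hm := zeroMult_nonneg ρ
    calc ‖zeroMult ρ / ρ * poleTerm μ ρ (log x)‖ ≤ zeroMult ρ / ‖ρ‖ * ((√x + 1) / ‖ρ‖) := by
          rw [norm_mul, norm_div, Complex.norm_of_nonneg hm]
          gcongr
          exact hpole.trans (by
            gcongr; exact norm_le_norm_add_of_xi_eq_zero hRH (zero_le_one.trans hμ) h)
      _ = zeroMult ρ / ‖ρ‖ ^ 2 * (√x + 1) := by field
  · simp [zeroMult_eq_zero h]

theorem abs_psiErrorMoment_le (hRH : RiemannHypothesis) (hm : Even m) (hx : 1 ≤ x) :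
    |psiErrorMoment m x| ≤ x ^ (m + 1) * (0.2 * √x + (m + 9)) := by
  have hμ : (1 : ℝ) ≤ (m + 1 : ℕ) := by simp
  have hxm : 0 < x ^ (m + 1) := by positivity
  rw [← inv_mul_le_iff₀ hxm, ← abs_of_pos (inv_pos.mpr hxm), ← abs_mul, ← norm_eq_abs,
    ← Complex.norm_real, psiErrorMoment_eq hRH hm hx]
  have hbounded := norm_boundedTerm_le hμ (avoidsTrivialZeros_of_odd hm.add_one) (log_nonneg hx)
  have hzeros := norm_zeroSum_log_le hRH hμ hx
  push_cast at hbounded hzeros ⊢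
  refine (norm_sub_le _ _).trans ?_
  nlinarith [xiLogDeriv_half_le, sqrt_nonneg x]

/-- The zeros of height at most `G` are in phase at `x`: every such `x ^ (I * γ)` is within `δ`
of `1`. -/
def ZerosAligned (G δ x : ℝ) : Prop :=
  ∀ ρ : ℂ, xi ρ = 0 → |ρ.im| ≤ G → ‖(x : ℂ) ^ (ρ.im * Complex.I) - 1‖ ≤ δ

lemma ZerosAligned.norm_mul_zeroMult_div_le (h : ZerosAligned G δ x) (hRH : RiemannHypothesis)
    (hG : 0 < G) (hδ : 0 ≤ δ) (hx : 1 ≤ x) {ρ : ℂ} (hρ : xi ρ = 0) :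
    ‖(x : ℂ) ^ (ρ.im * Complex.I) - 1‖ * (zeroMult ρ / ‖ρ‖ ^ 2)
      ≤ δ * (zeroMult ρ / ‖ρ‖ ^ 2) + 4 / G * (zeroMult ρ * (G / (G ^ 2 + ρ.im ^ 2))) := by
  have hm := zeroMult_nonneg ρ
  rcases le_or_gt |ρ.im| G with him | him
  · exact (mul_le_mul_of_nonneg_right (h ρ hρ him) (by positivity)).trans
      (le_add_of_nonneg_right (by positivity))
  · have hdist : ‖(x : ℂ) ^ (ρ.im * Complex.I) - 1‖ ≤ 2 := by
      refine (norm_sub_le _ _).trans ?_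
      rw [norm_ofReal_cpow_mul_I hx, norm_one]
      norm_num
    calc ‖(x : ℂ) ^ (ρ.im * Complex.I) - 1‖ * (zeroMult ρ / ‖ρ‖ ^ 2)
      _ ≤ 2 * (2 / G * (zeroMult ρ * (G / (G ^ 2 + ρ.im ^ 2)))) := by
        gcongr
        exact zeroMult_div_norm_sq_le_of_lt_abs_im hRH hG him
      _ = 4 / G * (zeroMult ρ * (G / (G ^ 2 + ρ.im ^ 2))) := by ring
      _ ≤ δ * (zeroMult ρ / ‖ρ‖ ^ 2) + 4 / G * (zeroMult ρ * (G / (G ^ 2 + ρ.im ^ 2))) :=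
        le_add_of_nonneg_left (by positivity)

/-- If the low zeros are in phase at `x`, then `zeroSum` is close to its value with every `x ^ ρ`
replaced by `√x`, and Hadamard's product evaluates the latter. -/
lemma ZerosAligned.norm_mul_zeroSum_sub_le (h : ZerosAligned G δ x) (hRH : RiemannHypothesis)
    (hG : 0 < G) (hδ : 0 ≤ δ) (hμ : 1 ≤ μ) (hx : 1 ≤ x) :
    ‖μ * zeroSum μ (log x) - (√x - x ^ (-μ) : ℝ) * (logDeriv xi (-μ) - logDeriv xi 0)‖
      ≤ μ * √x * (δ * (2 * xiLogDeriv (1 / 2)) + 4 / G * xiLogDeriv G) := by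
  have hdiff := ((hasSum_zeroSum hRH hμ (log x)).mul_left (μ : ℂ)).sub
    ((hasSum_logDeriv_xi hRH (one_le_abs_re_neg_sub_half hμ)).mul_left ((√x - x ^ (-μ) : ℝ) : ℂ))
  have hbound := (((hasSum_zeroMult_div_norm_sq hRH).mul_left δ).add
    ((hasSum_zeroMult_mul_poisson hRH hG).mul_left (4 / G))).mul_left (μ * √x)
  rw [← hdiff.tsum_eq]
  refine tsum_of_norm_bounded hbound fun ρ ↦ ?_
  by_cases hρ : xi ρ = 0
  · have hρ0 := ne_zero_of_xi_eq_zero hρ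
    have hnorm := norm_le_norm_add_of_xi_eq_zero hRH (zero_le_one.trans hμ) hρ
    have hρpos := norm_pos_iff.mpr hρ0
    have hρμ : ρ + μ ≠ 0 := norm_pos_iff.mp (by linarith)
    have hm := zeroMult_nonneg ρ
    have hterm : (μ : ℂ) * (zeroMult ρ / ρ * poleTerm μ ρ (log x))
        - (√x - x ^ (-μ) : ℝ) * (zeroMult ρ * (-μ / (ρ * (-μ - ρ)))) =
        (μ * √x * zeroMult ρ : ℝ) * ((x : ℂ) ^ (ρ.im * Complex.I) - 1) / (ρ * (ρ + μ)) := by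
      rw [poleTerm_log_of_xi_eq_zero hRH μ hρ hx, ← neg_add', add_comm (μ : ℂ), mul_neg,
        neg_div_neg_eq]
      push_cast
      field
    rw [hterm, norm_div, norm_mul, norm_mul, Complex.norm_of_nonneg (by positivity)]
    set d := ‖(x : ℂ) ^ (ρ.im * Complex.I) - 1‖
    calc μ * √x * zeroMult ρ * d / (‖ρ‖ * ‖ρ + μ‖)
      _ ≤ μ * √x * zeroMult ρ * d / (‖ρ‖ * ‖ρ‖) := by gcongr
      _ = μ * √x * (d * (zeroMult ρ / ‖ρ‖ ^ 2)) := by ring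
      _ ≤ μ * √x * (δ * (zeroMult ρ / ‖ρ‖ ^ 2)
            + 4 / G * (zeroMult ρ * (G / (G ^ 2 + ρ.im ^ 2)))) := by
        gcongr
        exact h.norm_mul_zeroMult_div_le hRH hG hδ hx hρ
  · simp [zeroMult_eq_zero hρ]

lemma re_logDeriv_xi_neg_sub (μ : ℝ) :
    (logDeriv xi (-μ) - logDeriv xi 0).re = xiLogDeriv (1 / 2) - xiLogDeriv (μ + 1 / 2) := by
  have hneg : logDeriv xi (-μ) = -logDeriv xi (1 / 2 + ((μ + 1 / 2 : ℝ) : ℂ)) := by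
    rw [← logDeriv_xi_one_sub]
    push_cast
    ring_nf
  rw [hneg, logDeriv_xi_zero, Complex.sub_re, Complex.neg_re, Complex.neg_re, Complex.ofReal_re,
    xiLogDeriv, xiLogDeriv]
  ring

theorem ZerosAligned.le_mul_psiErrorMoment (h : ZerosAligned G δ x) (hRH : RiemannHypothesis)
    (hG : 0 < G) (hδ : 0 ≤ δ) (hm : Even m) (hμ : μ = m + 1) (hx : 1 ≤ x) :
    x ^ (m + 1) * ((√x - x ^ (-μ)) * (xiLogDeriv (μ + 1 / 2) - xiLogDeriv (1 / 2))
        - μ * √x * (δ * (2 * xiLogDeriv (1 / 2)) + 4 / G * xiLogDeriv G) - μ * (μ + 7))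
      ≤ μ * psiErrorMoment m x := by
  obtain rfl : μ = (m + 1 : ℕ) := by push_cast; exact hμ
  have hμ1 : (1 : ℝ) ≤ (m + 1 : ℕ) := by simp
  have hxm : 0 < x ^ (m + 1) := by positivity
  rw [← le_inv_mul_iff₀ hxm, mul_left_comm _ ((m + 1 : ℕ) : ℝ) (psiErrorMoment m x)]
  have hbounded := (abs_le.mp ((Complex.abs_re_le_norm _).trans (norm_boundedTerm_le hμ1
    (avoidsTrivialZeros_of_odd hm.add_one) (log_nonneg hx)))).1
  have hzeros := (abs_le.mp ((Complex.abs_re_le_norm _).trans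
    (h.norm_mul_zeroSum_sub_le hRH hG hδ hμ1 hx))).2
  have hre := congrArg Complex.re (psiErrorMoment_eq hRH hm hx)
  rw [Complex.ofReal_re, Complex.sub_re] at hre
  rw [Complex.sub_re, Complex.re_ofReal_mul, Complex.re_ofReal_mul,
    re_logDeriv_xi_neg_sub] at hzeros
  rw [hre]
  nlinarith

theorem ZerosAligned.le_psiErrorMoment_998 (h : ZerosAligned 50000 0.0001 x)
    (hRH : RiemannHypothesis) (hx : 1 ≤ x) :
    x ^ 999 * (1.9 * √x - 1100000) ≤ 999 * psiErrorMoment 998 x := by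
  refine le_trans ?_ (h.le_mul_psiErrorMoment (μ := 999) hRH (by norm_num) (by norm_num)
    (by decide) (by norm_num) hx)
  have hpow : x ^ (-999 : ℝ) ≤ 1 := rpow_le_one_of_one_le_of_nonpos hx (by norm_num)
  have hsqrt : 1 ≤ √x := one_le_sqrt.mpr hx
  have hgap : 2.3 ≤ xiLogDeriv (999 + 1 / 2) - xiLogDeriv (1 / 2) := by
    norm_num only at *
    linarith [le_xiLogDeriv_999, xiLogDeriv_half_le]
  have herror :
      999 * (0.0001 * (2 * xiLogDeriv (1 / 2)) + 4 / 50000 * xiLogDeriv 50000) ≤ 0.39 := by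
    linarith [xiLogDeriv_half_le, xiLogDeriv_50000_le]
  have hmain : 2.3 * (√x - 1) ≤
      (√x - x ^ (-999 : ℝ)) * (xiLogDeriv (999 + 1 / 2) - xiLogDeriv (1 / 2)) := by
    nlinarith
  exact mul_le_mul_of_nonneg_left (by nlinarith) (by positivity)

end PsiErrorMoment

section PrimeCounting

open Chebyshev Topology

variable {x y a b : ℝ}

lemma primePi_eq_primeCounting (hx : 0 ≤ x) : primePi x = Nat.primeCounting ⌊x⌋₊ := by
  have hset : {p : ℕ | p.Prime ∧ (p : ℝ) ≤ x} =
      ((Finset.range (⌊x⌋₊ + 1)).filter Nat.Prime : Set ℕ) := by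
    ext p
    simp only [mem_ofPred_eq, Finset.coe_filter, Finset.mem_range, Nat.lt_succ_iff,
      Nat.le_floor_iff hx]
    exact and_comm
  rw [primePi, hset, Nat.card_coe_set_eq, ncard_coe_finset, Nat.primeCounting,
    Nat.primeCounting', Nat.count_eq_card_filter_range]

lemma le_log_of_two_le (hy : 2 ≤ y) : 0.69 ≤ log y := by
  linarith [log_two_gt_d9, log_le_log two_pos hy]

lemma log_ne_zero_of_two_le (hy : 2 ≤ y) : log y ≠ 0 := by
  linarith [le_log_of_two_le hy]

lemma log_four_le : log 4 ≤ 1.3863 := by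
  rw [show (4 : ℝ) = 2 ^ 2 by norm_num, log_pow]
  push_cast
  linarith [log_two_lt_d9]

lemma uIcc_subset_Ici_two (ha : 2 ≤ a) (hb : 2 ≤ b) : uIcc a b ⊆ Ici 2 :=
  ordConnected_Ici.uIcc_subset ha hb

lemma continuousOn_log_Ici_two : ContinuousOn log (Ici 2) := fun _ ht ↦
  (continuousAt_log (two_pos.trans_le ht).ne').continuousWithinAt

lemma Li_eq (hx : 2 ≤ x) :
    Li x = x / log x - 2 / log 2 + ∫ t in (2 : ℝ)..x, 1 / log t ^ 2 := by
  have hsub := uIcc_subset_Ici_two le_rfl hx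
  have hinv : IntervalIntegrable (fun t ↦ 1 / log t) MeasureTheory.volume 2 x :=
    (continuousOn_const.div (continuousOn_log_Ici_two.mono hsub) fun t ht ↦
      log_ne_zero_of_two_le (hsub ht)).intervalIntegrable
  have hinv_sq := intervalIntegrable_one_div_log_sq (a := 2) (b := x) one_lt_two (by linarith)
  have hderiv (t : ℝ) (ht : t ∈ uIcc 2 x) :
      HasDerivAt (fun t ↦ t / log t) (1 / log t - 1 / log t ^ 2) t := by
    have ht0 : t ≠ 0 := (two_pos.trans_le (hsub ht)).ne'
    have hlog := log_ne_zero_of_two_le (hsub ht)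
    refine ((hasDerivAt_id t).div (hasDerivAt_log ht0) hlog).congr_deriv ?_
    simp only [id]
    field
  have h := intervalIntegral.integral_eq_sub_of_hasDerivAt hderiv (hinv.sub hinv_sq)
  rw [intervalIntegral.integral_sub hinv hinv_sq] at h
  rw [Li]
  linarith

/-- The weight with which partial summation turns `θ` into `π`. -/
noncomputable def logWeight (y : ℝ) : ℝ := 1 / (y * log y ^ 2)

/-- The derivative of `logWeight`. -/
noncomputable def logWeightDeriv (y : ℝ) : ℝ := -(log y ^ 2 + 2 * log y) / (y * log y ^ 2) ^ 2

lemma logWeight_nonneg (hy : 0 ≤ y) : 0 ≤ logWeight y := by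
  unfold logWeight
  positivity

lemma hasDerivAt_logWeight (hy : 2 ≤ y) : HasDerivAt logWeight (logWeightDeriv y) y := by
  have hy0 : y ≠ 0 := by linarith
  have hlog := log_ne_zero_of_two_le hy
  unfold logWeight logWeightDeriv
  simp only [one_div]
  refine ((hasDerivAt_id y).mul ((hasDerivAt_log hy0).pow 2)).inv
    (mul_ne_zero hy0 (pow_ne_zero 2 hlog)) |>.congr_deriv ?_
  simp only [id, one_mul, Nat.cast_ofNat, Nat.add_one_sub_one, pow_one, Pi.mul_apply, Pi.pow_apply]
  field

lemma continuousOn_logWeight : ContinuousOn logWeight (Ici 2) := fun _ hy ↦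
  (hasDerivAt_logWeight hy).continuousAt.continuousWithinAt

lemma continuousOn_logWeightDeriv : ContinuousOn logWeightDeriv (Ici 2) := by
  have hlog := continuousOn_log_Ici_two
  refine ContinuousOn.div (by fun_prop) (by fun_prop) fun y hy ↦ ?_
  exact pow_ne_zero 2 (mul_ne_zero (two_pos.trans_le hy).ne'
    (pow_ne_zero 2 (log_ne_zero_of_two_le hy)))

lemma abs_logWeightDeriv_mul_le (hy : 2 ≤ y) : |logWeightDeriv y| * y ≤ 4 * logWeight y := by
  have hlog := le_log_of_two_le hy
  have : 0 < y := by linarith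
  calc |logWeightDeriv y| * y = (log y ^ 2 + 2 * log y) / (y * log y ^ 4) := by
        rw [logWeightDeriv, abs_div, abs_neg, abs_of_pos (by positivity),
          abs_of_pos (by positivity)]
        field
    _ ≤ 4 * log y ^ 2 / (y * log y ^ 4) := by
        gcongr
        nlinarith
    _ = 4 * logWeight y := by
        rw [logWeight]
        field

/-- The integral through which `π - Li` depends on the values of `θ` on the whole of `[2, x]`. -/
noncomputable def thetaErrorIntegral (x : ℝ) : ℝ := ∫ t in (2 : ℝ)..x, (θ t - t) * logWeight t

lemma intervalIntegrable_theta (a b : ℝ) : IntervalIntegrable θ MeasureTheory.volume a b :=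
  theta_mono.intervalIntegrable

theorem primePi_sub_Li_mul_log (hx : 2 ≤ x) :
    (primePi x - Li x) * log x = θ x - x + log x * (2 / log 2 + thetaErrorIntegral x) := by
  have hsub := uIcc_subset_Ici_two le_rfl hx
  have hint : thetaErrorIntegral x =
      (∫ t in (2 : ℝ)..x, θ t / (t * log t ^ 2)) - ∫ t in (2 : ℝ)..x, 1 / log t ^ 2 := by
    rw [thetaErrorIntegral, ← intervalIntegral.integral_sub]
    · refine intervalIntegral.integral_congr fun t ht ↦ ?_
      have ht0 : t ≠ 0 := (two_pos.trans_le (hsub ht)).ne'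
      have hlog := log_ne_zero_of_two_le (hsub ht)
      simp only [logWeight]
      field
    · refine ((intervalIntegrable_theta 2 x).mul_continuousOn
        (continuousOn_logWeight.mono hsub)).congr fun t _ ↦ ?_
      simp only [logWeight]
      ring
    · exact intervalIntegrable_one_div_log_sq one_lt_two (by linarith)
  have hlog := log_ne_zero_of_two_le hx
  rw [hint, primePi_eq_primeCounting (by linarith),
    primeCounting_eq_theta_div_log_add_integral hx, Li_eq hx]
  field

lemma intervalIntegrable_psi_sub (a b : ℝ) :
    IntervalIntegrable (fun t ↦ ψ t - t) MeasureTheory.volume a b :=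
  (intervalIntegrable_psi a b).sub (continuous_id.intervalIntegrable a b)

lemma continuousWithinAt_psi_Ioi (hy : 0 ≤ y) : ContinuousWithinAt ψ (Ioi y) y := by
  suffices h : ψ =ᶠ[𝓝[>] y] fun _ ↦ ψ y from
    continuousWithinAt_const.congr_of_eventuallyEq h rfl
  filter_upwards [Ioo_mem_nhdsGT (Nat.lt_floor_add_one y)] with z hz
  have hfloor : ⌊z⌋₊ = ⌊y⌋₊ := by
    rw [Nat.floor_eq_iff (by linarith [hz.1])]
    exact ⟨(Nat.floor_le hy).trans hz.1.le, hz.2⟩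
  rw [psi_eq_sum_Icc, psi_eq_sum_Icc, hfloor]

lemma psiErrorMoment_zero : psiErrorMoment 0 = fun x ↦ ∫ t in (1 : ℝ)..x, (ψ t - t) := by
  funext x
  simp only [psiErrorMoment, pow_zero, mul_one]

lemma hasDerivWithinAt_psiErrorMoment_zero (hy : 0 ≤ y) :
    HasDerivWithinAt (psiErrorMoment 0) (ψ y - y) (Ioi y) y := by
  rw [psiErrorMoment_zero]
  refine (intervalIntegral.integral_hasDerivWithinAt_right (s := Ici y) (t := Ioi y)
    (intervalIntegrable_psi_sub 1 y) ?_
    ((continuousWithinAt_psi_Ioi hy).sub continuousWithinAt_id)).mono Ioi_subset_Ici_self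
  exact (psi_mono.measurable.sub measurable_id).stronglyMeasurable.stronglyMeasurableAtFilter

lemma continuous_psiErrorMoment_zero : Continuous (psiErrorMoment 0) :=
  psiErrorMoment_zero ▸ intervalIntegral.continuous_primitive intervalIntegrable_psi_sub 1

lemma integral_logWeight_mul_psi_sub (hx : 2 ≤ x) :
    ∫ t in (2 : ℝ)..x, logWeight t * (ψ t - t) =
      logWeight x * psiErrorMoment 0 x - logWeight 2 * psiErrorMoment 0 2
        - ∫ t in (2 : ℝ)..x, logWeightDeriv t * psiErrorMoment 0 t := by
  have hsub := uIcc_subset_Ici_two le_rfl hx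
  refine intervalIntegral.integral_mul_deriv_eq_deriv_mul_of_hasDeriv_right
    (continuousOn_logWeight.mono hsub) continuous_psiErrorMoment_zero.continuousOn
    (fun t ht ↦ ?_) (fun t ht ↦ ?_) (continuousOn_logWeightDeriv.mono hsub).intervalIntegrable
    (intervalIntegrable_psi_sub 2 x)
  · rw [min_eq_left hx] at ht
    exact (hasDerivAt_logWeight ht.1.le).hasDerivWithinAt
  · rw [min_eq_left hx] at ht
    exact hasDerivWithinAt_psiErrorMoment_zero (by linarith [ht.1])

/-- `√y * logWeight y`, which dominates the integrands in the bound for `thetaErrorIntegral`. -/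
noncomputable def sqrtLogWeight (y : ℝ) : ℝ := 1 / (√y * log y ^ 2)

lemma sqrt_mul_logWeight (y : ℝ) : √y * logWeight y = sqrtLogWeight y := by
  rw [logWeight, sqrtLogWeight, mul_one_div, ← div_div, sqrt_div_self', div_div]

lemma intervalIntegrable_sqrtLogWeight (ha : 2 ≤ a) (hb : 2 ≤ b) :
    IntervalIntegrable sqrtLogWeight MeasureTheory.volume a b := by
  have h : ContinuousOn sqrtLogWeight (Ici 2) :=
    (continuous_sqrt.continuousOn.mul continuousOn_logWeight).congr fun t _ ↦
      (sqrt_mul_logWeight t).symm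
  exact (h.mono (uIcc_subset_Ici_two ha hb)).intervalIntegrable

lemma integral_sqrtLogWeight_le (ha : 2 ≤ a) (hab : a ≤ b) :
    ∫ t in a..b, sqrtLogWeight t ≤ 2 * √b / log a ^ 2 := by
  have hlog := le_log_of_two_le ha
  have hpos (t : ℝ) (ht : t ∈ uIcc a b) : 0 < t :=
    two_pos.trans_le (uIcc_subset_Ici_two ha (ha.trans hab) ht)
  have hderiv (t : ℝ) (ht : t ∈ uIcc a b) :
      HasDerivAt (fun t ↦ 2 * √t / log a ^ 2) (1 / (√t * log a ^ 2)) t := by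
    have := sqrt_pos.mpr (hpos t ht)
    refine (((hasDerivAt_sqrt (hpos t ht).ne').const_mul 2).div_const _).congr_deriv ?_
    field
  have hint : IntervalIntegrable (fun t ↦ 1 / (√t * log a ^ 2)) MeasureTheory.volume a b := by
    refine ContinuousOn.intervalIntegrable (ContinuousOn.div (by fun_prop) (by fun_prop)
      fun t ht ↦ ?_)
    have := sqrt_pos.mpr (hpos t ht)
    positivity
  calc ∫ t in a..b, sqrtLogWeight t ≤ ∫ t in a..b, 1 / (√t * log a ^ 2) := by
        refine intervalIntegral.integral_mono_on hab
          (intervalIntegrable_sqrtLogWeight ha (ha.trans hab)) hint fun t ht ↦ ?_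
        have := sqrt_pos.mpr (hpos t (Icc_subset_uIcc ht))
        have := log_le_log (by linarith) ht.1
        unfold sqrtLogWeight
        gcongr
    _ = 2 * √b / log a ^ 2 - 2 * √a / log a ^ 2 :=
        intervalIntegral.integral_eq_sub_of_hasDerivAt hderiv hint
    _ ≤ 2 * √b / log a ^ 2 := sub_le_self _ (by positivity)

lemma psi_sub_theta_le_mul_sqrt (hx : 1 ≤ x) : ψ x - θ x ≤ 17 * √x := by
  have hroot (n : ℝ) (hn : 2 ≤ n) : ψ (x ^ n⁻¹) ≤ 5.4 * √x := by
    have hle : x ^ n⁻¹ ≤ √x := by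
      rw [sqrt_eq_rpow, one_div]
      exact rpow_le_rpow_of_exponent_le hx (by gcongr)
    calc ψ (x ^ n⁻¹) ≤ (log 4 + 4) * x ^ n⁻¹ := psi_le_const_mul_self (by positivity)
      _ ≤ 5.4 * √x := by
        gcongr
        linarith [log_four_le]
  linarith [psi_sub_theta_le_psi_add_psi_add_psi x, hroot 2 le_rfl, hroot 3 (by norm_num),
    hroot 5 (by norm_num), sqrt_nonneg x]

lemma abs_psiErrorMoment_zero_le (hRH : RiemannHypothesis) (hx : 1 ≤ x) :
    |psiErrorMoment 0 x| ≤ x * (10 * √x) := by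
  have hsqrt : 1 ≤ √x := one_le_sqrt.mpr hx
  refine (abs_psiErrorMoment_le hRH Even.zero hx).trans ?_
  rw [zero_add, pow_one]
  gcongr
  push_cast
  linarith

lemma abs_logWeight_mul_psiErrorMoment_zero_le (hRH : RiemannHypothesis) (hy : 2 ≤ y) :
    |logWeight y * psiErrorMoment 0 y| ≤ 10 * √y / log y ^ 2 := by
  have hlog := le_log_of_two_le hy
  have hw := logWeight_nonneg (zero_le_two.trans hy)
  calc |logWeight y * psiErrorMoment 0 y| ≤ logWeight y * (y * (10 * √y)) := by
        rw [abs_mul, abs_of_nonneg hw]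
        gcongr
        exact abs_psiErrorMoment_zero_le hRH (by linarith)
    _ = 10 * √y / log y ^ 2 := by
        rw [logWeight]
        field

lemma abs_integral_logWeight_mul_psi_sub_theta_le (hx : 2 ≤ x) :
    |∫ t in (2 : ℝ)..x, logWeight t * (ψ t - θ t)| ≤ 17 * ∫ t in (2 : ℝ)..x, sqrtLogWeight t := by
  rw [← norm_eq_abs, ← intervalIntegral.integral_const_mul]
  refine intervalIntegral.norm_integral_le_of_norm_le hx (Eventually.of_forall fun t ht ↦ ?_)
    ((intervalIntegrable_sqrtLogWeight le_rfl hx).const_mul _)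
  have hw := logWeight_nonneg (zero_le_two.trans ht.1.le)
  rw [norm_eq_abs, abs_mul, abs_of_nonneg hw, abs_of_nonneg (sub_nonneg.mpr (theta_le_psi t)),
    ← sqrt_mul_logWeight]
  calc logWeight t * (ψ t - θ t) ≤ logWeight t * (17 * √t) := by
        gcongr
        exact psi_sub_theta_le_mul_sqrt (by linarith [ht.1])
    _ = 17 * (√t * logWeight t) := by ring

lemma abs_integral_logWeightDeriv_mul_le (hRH : RiemannHypothesis) (hx : 2 ≤ x) :
    |∫ t in (2 : ℝ)..x, logWeightDeriv t * psiErrorMoment 0 t|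
      ≤ 40 * ∫ t in (2 : ℝ)..x, sqrtLogWeight t := by
  rw [← norm_eq_abs, ← intervalIntegral.integral_const_mul]
  refine intervalIntegral.norm_integral_le_of_norm_le hx (Eventually.of_forall fun t ht ↦ ?_)
    ((intervalIntegrable_sqrtLogWeight le_rfl hx).const_mul _)
  rw [norm_eq_abs, abs_mul, ← sqrt_mul_logWeight]
  calc |logWeightDeriv t| * |psiErrorMoment 0 t| ≤ |logWeightDeriv t| * (t * (10 * √t)) :=
        mul_le_mul_of_nonneg_left (abs_psiErrorMoment_zero_le hRH (by linarith [ht.1]))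
          (abs_nonneg _)
    _ = (|logWeightDeriv t| * t) * (10 * √t) := by ring
    _ ≤ (4 * logWeight t) * (10 * √t) :=
        mul_le_mul_of_nonneg_right (abs_logWeightDeriv_mul_le ht.1.le) (by positivity)
    _ = 40 * (√t * logWeight t) := by ring

lemma abs_thetaErrorIntegral_le (hRH : RiemannHypothesis) (hx : 2 ≤ x) :
    |thetaErrorIntegral x| ≤
      10 * √x / log x ^ 2 + 32 + 57 * ∫ t in (2 : ℝ)..x, sqrtLogWeight t := by
  have hw := continuousOn_logWeight.mono (uIcc_subset_Ici_two le_rfl hx)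
  have hsplit : thetaErrorIntegral x = (∫ t in (2 : ℝ)..x, logWeight t * (ψ t - t)) -
      ∫ t in (2 : ℝ)..x, logWeight t * (ψ t - θ t) := by
    rw [thetaErrorIntegral, ← intervalIntegral.integral_sub
      ((intervalIntegrable_psi_sub 2 x).continuousOn_mul hw)
      (((intervalIntegrable_psi 2 x).sub (intervalIntegrable_theta 2 x)).continuousOn_mul hw)]
    congr 1 with t
    ring
  have htwo : |logWeight 2 * psiErrorMoment 0 2| ≤ 32 := by
    refine (abs_logWeight_mul_psiErrorMoment_zero_le hRH le_rfl).trans ?_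
    have hlog := le_log_of_two_le le_rfl
    have hsqrt : √2 ≤ 1.42 := (sqrt_le_left (by norm_num)).mpr (by norm_num)
    rw [div_le_iff₀ (by positivity)]
    nlinarith
  have hx' := abs_logWeight_mul_psiErrorMoment_zero_le hRH hx
  have hderiv := abs_integral_logWeightDeriv_mul_le hRH hx
  have hpowers := abs_integral_logWeight_mul_psi_sub_theta_le hx
  rw [hsplit, integral_logWeight_mul_psi_sub hx]
  rw [abs_le] at *
  constructor <;> linarith

lemma log_sq_le_sqrt_sqrt (hx : exp 384 ≤ x) : log x ^ 2 ≤ √√x := by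
  have hx0 : 0 < x := (exp_pos _).trans_le hx
  have hlog : 384 ≤ log x := (le_log_iff_exp_le hx0).mpr hx
  calc log x ^ 2 ≤ (log x / 4) ^ 3 / 6 := by nlinarith [sq_nonneg (log x)]
    _ ≤ exp (log x / 4) := pow_div_factorial_le_exp (log x / 4) (by linarith) 3
    _ = √√x := by
      rw [sqrt_eq_rpow, sqrt_eq_rpow, ← rpow_mul hx0.le, rpow_def_of_pos hx0]
      ring_nf

section Large

variable (hx : exp 1000000 ≤ x)
include hx

lemma pos_of_exp_le : 0 < x := (exp_pos _).trans_le hx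

lemma le_log_of_exp_le : 1000000 ≤ log x := (le_log_iff_exp_le (pos_of_exp_le hx)).mpr hx

lemma log_sq_le_sqrt_sqrt_of_exp_le : log x ^ 2 ≤ √√x :=
  log_sq_le_sqrt_sqrt ((exp_le_exp.mpr (by norm_num)).trans hx)

lemma le_sqrt_sqrt_of_exp_le : 10 ^ 12 ≤ √√x := by
  nlinarith [le_log_of_exp_le hx, log_sq_le_sqrt_sqrt_of_exp_le hx]

lemma le_sqrt_of_exp_le : 10 ^ 24 ≤ √x := by
  nlinarith [le_sqrt_sqrt_of_exp_le hx, mul_self_sqrt (sqrt_nonneg x)]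

lemma sqrt_le_self_of_exp_le : √x ≤ x := by
  nlinarith [le_sqrt_of_exp_le hx, mul_self_sqrt (pos_of_exp_le hx).le]

lemma sqrt_sqrt_le_sqrt_div_log_sq : √√x ≤ √x / log x ^ 2 := by
  have hlog := le_log_of_exp_le hx
  rw [le_div_iff₀ (by positivity)]
  nlinarith [log_sq_le_sqrt_sqrt_of_exp_le hx, mul_self_sqrt (sqrt_nonneg x), sqrt_nonneg √x]

lemma integral_sqrtLogWeight_two_le :
    ∫ t in (2 : ℝ)..x, sqrtLogWeight t ≤ 12.3 * (√x / log x ^ 2) := by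
  have hlog := le_log_of_exp_le hx
  have hsqrt := le_sqrt_of_exp_le hx
  have hle := sqrt_le_self_of_exp_le hx
  have hlow : ∫ t in (2 : ℝ)..√x, sqrtLogWeight t ≤ 4.3 * √√x := by
    refine (integral_sqrtLogWeight_le le_rfl (by linarith)).trans ?_
    have hlog_two := le_log_of_two_le le_rfl
    have hsq : 0.47 ≤ log 2 ^ 2 := by nlinarith
    rw [div_le_iff₀ (by positivity)]
    nlinarith [sqrt_nonneg √x]
  have hhigh : ∫ t in √x..x, sqrtLogWeight t ≤ 8 * (√x / log x ^ 2) := by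
    refine (integral_sqrtLogWeight_le (by linarith) hle).trans_eq ?_
    rw [log_sqrt (pos_of_exp_le hx).le]
    field
  rw [← intervalIntegral.integral_add_adjacent_intervals
    (intervalIntegrable_sqrtLogWeight le_rfl (by linarith))
    (intervalIntegrable_sqrtLogWeight (a := √x) (by linarith) (by linarith))]
  linarith [sqrt_sqrt_le_sqrt_div_log_sq hx]

theorem abs_primePi_sub_Li_mul_log_sub_le (hRH : RiemannHypothesis) :
    |(primePi x - Li x) * log x - (θ x - x)| ≤ 0.001 * √x := by
  have hlog := le_log_of_exp_le hx
  have hx2 : 2 ≤ x := by linarith [le_sqrt_of_exp_le hx, sqrt_le_self_of_exp_le hx]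
  have hlog_two := le_log_of_two_le le_rfl
  have hconst : 2 / log 2 ≤ 3 := by rw [div_le_iff₀ (by linarith)]; linarith
  have hint := abs_thetaErrorIntegral_le hRH hx2
  rw [mul_div_assoc] at hint
  have hlarge := (le_sqrt_sqrt_of_exp_le hx).trans (sqrt_sqrt_le_sqrt_div_log_sq hx)
  have hsum : |2 / log 2 + thetaErrorIntegral x| ≤ 753 * (√x / log x ^ 2) := by
    refine (abs_add_le _ _).trans ?_
    rw [abs_of_pos (by positivity)]
    linarith [integral_sqrtLogWeight_two_le hx]
  calc |(primePi x - Li x) * log x - (θ x - x)|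
    _ = log x * |2 / log 2 + thetaErrorIntegral x| := by
      rw [primePi_sub_Li_mul_log hx2, add_sub_cancel_left, abs_mul, abs_of_pos (by linarith)]
    _ ≤ log x * (753 * (√x / log x ^ 2)) := by gcongr
    _ = 753 / log x * √x := by field
    _ ≤ 0.001 * √x := by
      gcongr
      rw [div_le_iff₀ (by linarith)]
      linarith

lemma rpow_one_third_le : x ^ (3 : ℝ)⁻¹ ≤ 0.00001 * √x := by
  have hx0 := pos_of_exp_le hx
  have hsqrt : x ^ (3 : ℝ)⁻¹ * exp (log x / 6) = √x := by
    rw [sqrt_eq_rpow, rpow_def_of_pos hx0, rpow_def_of_pos hx0, ← exp_add]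
    ring_nf
  have hroot : 0 < x ^ (3 : ℝ)⁻¹ := by positivity
  nlinarith [add_one_le_exp (log x / 6), le_log_of_exp_le hx]

lemma psi_sqrt_le : ψ √x ≤ 1.38631 * √x := by
  have hlog := le_log_of_exp_le hx
  have hsqrt := le_sqrt_of_exp_le hx
  have hpsi := psi_sub_theta_le (x := √x) (by linarith)
  have htheta := theta_le_log4_mul_x (x := √x) (by linarith)
  rw [log_sqrt (pos_of_exp_le hx).le] at hpsi
  have hsmall : √√x * log x ≤ 0.000001 * √x := by
    nlinarith [mul_self_sqrt (sqrt_nonneg x), log_sq_le_sqrt_sqrt_of_exp_le hx]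
  nlinarith [log_four_le]

lemma psi_sub_theta_le_of_exp_le : ψ x - θ x ≤ 1.388 * √x := by
  have hx1 : 1 ≤ x := (one_le_exp (by norm_num)).trans hx
  have hroot (n : ℝ) (hn : 3 ≤ n) : ψ (x ^ n⁻¹) ≤ 5.4 * (0.00001 * √x) := by
    refine (psi_le_const_mul_self (by positivity)).trans ?_
    gcongr
    · linarith [log_four_le]
    · exact (rpow_le_rpow_of_exponent_le hx1 (by gcongr)).trans (rpow_one_third_le hx)
  have h := psi_sub_theta_le_psi_add_psi_add_psi x
  rw [← one_div (2 : ℝ), ← sqrt_eq_rpow] at h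
  linarith [psi_sqrt_le hx, hroot 3 le_rfl, hroot 5 (by norm_num), sqrt_nonneg x]

lemma le_psi_sub_theta_of_exp_le : 0.69 * √x ≤ ψ x - θ x := by
  have h := psi_sub_theta_ge_psi_add_psi_add_psi (pos_of_exp_le hx).le
  rw [← one_div (2 : ℝ), ← sqrt_eq_rpow] at h
  have hsqrt := le_sqrt_of_exp_le hx
  have hlog : log (√x + 2) ≤ 0.000001 * √x := by
    have hle : √x + 2 ≤ x := by nlinarith [mul_self_sqrt (pos_of_exp_le hx).le]
    refine (log_le_log (by linarith) hle).trans ?_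
    nlinarith [mul_self_sqrt (sqrt_nonneg x), log_sq_le_sqrt_sqrt_of_exp_le hx,
      le_log_of_exp_le hx, le_sqrt_sqrt_of_exp_le hx]
  nlinarith [psi_nonneg (x ^ (3 : ℝ)⁻¹), psi_nonneg (x ^ (7 : ℝ)⁻¹), psi_ge' (sqrt_nonneg x),
    log_two_gt_d9, log_two_lt_d9]

end Large

end PrimeCounting

section SignsInWindows

open Chebyshev

variable {x t : ℝ}

lemma psiErrorMoment_sub (m : ℕ) (a b : ℝ) :
    psiErrorMoment m b - psiErrorMoment m a = ∫ t in a..b, (ψ t - t) * t ^ m := by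
  have hint (c : ℝ) :=
    (intervalIntegrable_psi_sub 1 c).mul_continuousOn (continuous_pow m).continuousOn
  exact intervalIntegral.integral_interval_sub_left (hint b) (hint a)

lemma sqrt_div_four (x : ℝ) : √(x / 4) = √x / 2 := by
  rw [sqrt_div' x (by norm_num), show (4 : ℝ) = 2 ^ 2 by norm_num, sqrt_sq zero_le_two]

lemma exp_le_div_four (hx : exp 2000000 ≤ x) : exp 1000000 ≤ x / 4 := by
  have h4 : 4 ≤ exp 1000000 := by linarith [add_one_le_exp 1000000]
  rw [le_div_iff₀ four_pos]
  calc exp 1000000 * 4 ≤ exp 1000000 * exp 1000000 := by gcongr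
    _ = exp 2000000 := by rw [← exp_add]; norm_num
    _ ≤ x := hx

lemma le_psi_sub_of_primePi_sub_Li_nonneg (hRH : RiemannHypothesis) (ht : exp 1000000 ≤ t)
    (h : 0 ≤ primePi t - Li t) : 0.68 * √t ≤ ψ t - t := by
  have herr := (abs_le.mp (abs_primePi_sub_Li_mul_log_sub_le ht hRH)).2
  have hlog := le_log_of_exp_le ht
  have : 0 ≤ (primePi t - Li t) * log t := mul_nonneg h (by linarith)
  linarith [le_psi_sub_theta_of_exp_le ht, sqrt_nonneg t]

lemma psi_sub_le_of_primePi_sub_Li_nonpos (hRH : RiemannHypothesis) (ht : exp 1000000 ≤ t)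
    (h : primePi t - Li t ≤ 0) : ψ t - t ≤ 1.4 * √t := by
  have herr := (abs_le.mp (abs_primePi_sub_Li_mul_log_sub_le ht hRH)).1
  have hlog := le_log_of_exp_le ht
  have : (primePi t - Li t) * log t ≤ 0 := mul_nonpos_of_nonpos_of_nonneg h (by linarith)
  linarith [psi_sub_theta_le_of_exp_le ht, sqrt_nonneg t]

theorem exists_primePi_sub_Li_neg (hRH : RiemannHypothesis) (hx : exp 2000000 ≤ x) :
    ∃ t ∈ Icc (x / 4) x, primePi t - Li t < 0 := by
  by_contra! hnonneg
  have hx4 := exp_le_div_four hx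
  have hx4' : 1 ≤ x / 4 := (one_le_exp (by norm_num)).trans hx4
  have hsqrt : 10 ^ 24 ≤ √x := le_sqrt_of_exp_le (by linarith)
  have hlow (t : ℝ) (ht : t ∈ Icc (x / 4) x) : 0.34 * √x ≤ (ψ t - t) * t ^ 0 := by
    have h := le_psi_sub_of_primePi_sub_Li_nonneg hRH (hx4.trans ht.1) (hnonneg t ht)
    have hmono := sqrt_le_sqrt ht.1
    rw [sqrt_div_four] at hmono
    linarith
  have hmean : (x - x / 4) * (0.34 * √x) ≤ psiErrorMoment 0 x - psiErrorMoment 0 (x / 4) := by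
    rw [psiErrorMoment_sub, ← smul_eq_mul, ← intervalIntegral.integral_const]
    exact intervalIntegral.integral_mono_on (by linarith) (by simp)
      ((intervalIntegrable_psi_sub _ _).mul_continuousOn (by fun_prop)) hlow
  have hend := (abs_le.mp (abs_psiErrorMoment_le hRH Even.zero (by linarith : 1 ≤ x))).2
  have hstart := (abs_le.mp (abs_psiErrorMoment_le hRH Even.zero hx4')).1
  rw [sqrt_div_four] at hstart
  push_cast at hend hstart
  nlinarith

lemma mul_div_four_pow_le {n : ℕ} (hn : 10 ≤ n) (hx : 0 ≤ x) :
    999000 * (x / 4) ^ n ≤ x ^ n := by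
  have h4 : (999000 : ℝ) ≤ 4 ^ n :=
    (by norm_num : (999000 : ℝ) ≤ 4 ^ 10).trans (pow_le_pow_right₀ (by norm_num) hn)
  rw [div_pow, mul_div_assoc', div_le_iff₀ (by positivity), mul_comm]
  gcongr

lemma psiErrorMoment_sub_le {m : ℕ} {a b c : ℝ} (hab : a ≤ b)
    (h : ∀ t ∈ Icc a b, (ψ t - t) * t ^ m ≤ c * t ^ m) :
    psiErrorMoment m b - psiErrorMoment m a ≤
      c * ((b ^ (m + 1) - a ^ (m + 1)) / (m + 1)) := by
  calc psiErrorMoment m b - psiErrorMoment m a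
    _ = ∫ t in a..b, (ψ t - t) * t ^ m := psiErrorMoment_sub m _ _
    _ ≤ ∫ t in a..b, c * t ^ m :=
      intervalIntegral.integral_mono_on hab
        ((intervalIntegrable_psi_sub _ _).mul_continuousOn (by fun_prop))
        (Continuous.intervalIntegrable (by fun_prop) _ _) h
    _ = c * ((b ^ (m + 1) - a ^ (m + 1)) / (m + 1)) := by
      rw [intervalIntegral.integral_const_mul, integral_pow]

theorem exists_primePi_sub_Li_pos (hRH : RiemannHypothesis) (hx : exp 2000000 ≤ x)
    (hal : ZerosAligned 50000 0.0001 x) : ∃ t ∈ Icc (x / 4) x, 0 < primePi t - Li t := by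
  by_contra! hnonpos
  have hx4 := exp_le_div_four hx
  have hx4' : 1 ≤ x / 4 := (one_le_exp (by norm_num)).trans hx4
  have hsqrt : 10 ^ 24 ≤ √x := le_sqrt_of_exp_le (by linarith)
  have hup (t : ℝ) (ht : t ∈ Icc (x / 4) x) : (ψ t - t) * t ^ 998 ≤ 1.4 * √x * t ^ 998 := by
    have h := psi_sub_le_of_primePi_sub_Li_nonpos hRH (hx4.trans ht.1) (hnonpos t ht)
    have := sqrt_le_sqrt ht.2
    gcongr
    linarith
  have hmean := psiErrorMoment_sub_le (by linarith) hup
  have hend := hal.le_psiErrorMoment_998 hRH (by linarith)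
  have hstart := (abs_le.mp (abs_psiErrorMoment_le hRH (by decide : Even 998) hx4')).2
  have hpow := mul_div_four_pow_le (n := 999) (by norm_num) (by linarith : 0 ≤ x)
  rw [sqrt_div_four] at hstart
  norm_num only at hstart hmean
  have : 0 < x ^ 999 := pow_pos (by linarith) 999
  have : 0 < (x / 4) ^ 999 := pow_pos (by linarith) 999
  generalize x ^ 999 = X at *
  generalize (x / 4) ^ 999 = Y at *
  have hX : X * 10 ^ 24 ≤ X * √x := by gcongr
  have hY : 999000 * Y * √x ≤ X * √x := by gcongr
  nlinarith

end SignsInWindows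

section BoxPrinciple

variable {ι : Type*} {q : ℕ} {v w : ι → ℝ}

/-- The cell containing the image of `v` when each factor of the torus `(ℝ/ℤ)^ι` is cut into `q`
intervals of length `1 / q`. -/
noncomputable def gridCell (q : ℕ) (v : ι → ℝ) (j : ι) : ℕ := ⌊q * Int.fract (v j)⌋₊

lemma gridCell_lt (hq : 0 < q) (v : ι → ℝ) (j : ι) : gridCell q v j < q := by
  have hq' : (0 : ℝ) < q := by exact_mod_cast hq
  rw [gridCell, Nat.floor_lt (mul_nonneg hq'.le (Int.fract_nonneg _))]
  exact mul_lt_of_lt_one_right hq' (Int.fract_lt_one _)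

lemma exists_int_abs_sub_sub_le_of_gridCell_eq (hq : 0 < q) (h : gridCell q v = gridCell q w)
    (j : ι) : ∃ n : ℤ, |v j - w j - n| ≤ 1 / q := by
  have hq' : (0 : ℝ) < q := by exact_mod_cast hq
  have hpos (r : ℝ) : 0 ≤ q * Int.fract r := mul_nonneg hq'.le (Int.fract_nonneg r)
  have hfloor : ⌊q * Int.fract (v j)⌋ = ⌊q * Int.fract (w j)⌋ := by
    rw [← Int.natCast_floor_eq_floor (hpos _), ← Int.natCast_floor_eq_floor (hpos _)]
    exact congrArg _ (congrFun h j)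
  refine ⟨⌊v j⌋ - ⌊w j⌋, ?_⟩
  rw [le_div_iff₀ hq']
  calc |v j - w j - ((⌊v j⌋ - ⌊w j⌋ : ℤ) : ℝ)| * q
    _ = |(v j - w j - ((⌊v j⌋ - ⌊w j⌋ : ℤ) : ℝ)) * q| := by rw [abs_mul, abs_of_pos hq']
    _ = |q * Int.fract (v j) - q * Int.fract (w j)| := by
      rw [Int.fract, Int.fract]
      push_cast
      ring_nf
    _ ≤ 1 := (Int.abs_sub_lt_one_of_floor_eq_floor hfloor).le

lemma exists_finset_gridCell_smul_eq [Fintype ι] (hq : 0 < q) (n : ℕ) (α : ι → ℝ) :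
    ∃ (s : Finset ℕ) (c : ι → ℕ), s.card = n + 1 ∧
      ∀ k ∈ s, k ≤ q ^ Fintype.card ι * n ∧ gridCell q (k • α) = c := by
  classical
  set cells : Finset (ι → ℕ) := Fintype.piFinset fun _ ↦ Finset.range q
  have hcells : cells.card = q ^ Fintype.card ι := by simp [cells]
  obtain ⟨c, -, hc⟩ := Finset.exists_lt_card_fiber_of_mul_lt_card_of_maps_to
    (s := Finset.range (q ^ Fintype.card ι * n + 1)) (t := cells) (n := n)
    (f := fun k ↦ gridCell q (k • α))
    (fun k _ ↦ by simp [cells, Fintype.mem_piFinset, gridCell_lt hq])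
    (by rw [hcells, Finset.card_range]; exact Nat.lt_succ_self _)
  obtain ⟨s, hs, hcard⟩ := Finset.exists_subset_card_eq (Nat.succ_le_of_lt hc)
  refine ⟨s, c, hcard, fun k hk ↦ ?_⟩
  have hk := Finset.mem_filter.mp (hs hk)
  exact ⟨Finset.mem_range_succ_iff.mp hk.1, hk.2⟩

/- Two multiples `k • α`, `l • α` in the same cell give the good multiple `(k - l) • α`. -/
theorem exists_finset_multiples_near_int [Fintype ι] (hq : 0 < q) (n : ℕ) (α : ι → ℝ) :
    ∃ K : Finset ℕ, K.card = n ∧ ∀ k ∈ K, 1 ≤ k ∧ k ≤ q ^ Fintype.card ι * n ∧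
      ∀ j, ∃ m : ℤ, |k * α j - m| ≤ 1 / q := by
  classical
  obtain ⟨s, c, hcard, hs⟩ := exists_finset_gridCell_smul_eq hq n α
  have hne : s.Nonempty := Finset.card_pos.mp (by omega)
  set l := s.min' hne
  have hl : l ∈ s := s.min'_mem hne
  have hlt (k : ℕ) (hk : k ∈ s.erase l) : l < k := Finset.min'_lt_of_mem_erase_min' s hne hk
  refine ⟨(s.erase l).image (· - l), ?_, ?_⟩
  · rw [Finset.card_image_of_injOn, Finset.card_erase_of_mem hl, hcard, Nat.add_sub_cancel]
    intro k hk k' hk' h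
    have := hlt k hk
    have := hlt k' hk'
    simp only at h
    omega
  · simp only [Finset.forall_mem_image]
    intro k hk
    have hkl := hlt k hk
    have hks := hs k (Finset.mem_of_mem_erase hk)
    refine ⟨by omega, by omega, fun j ↦ ?_⟩
    rw [Nat.cast_sub hkl.le, sub_mul]
    simpa only [Pi.smul_apply, nsmul_eq_mul] using
      exists_int_abs_sub_sub_le_of_gridCell_eq hq (hks.2.trans (hs l hl).2.symm) j

end BoxPrinciple

section SignChanges

lemma mul_neg_of_neg_one_pow_mul_pos {R : Type*} [Ring R] [LinearOrder R] [IsStrictOrderedRing R]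
    {i : ℕ} {a b : R} (ha : 0 < (-1) ^ i * a) (hb : 0 < (-1) ^ (i + 1) * b) : a * b < 0 := by
  rw [pow_succ, mul_neg_one] at hb
  rcases neg_one_pow_eq_or R i with hi | hi <;>
    simp only [hi, one_mul, neg_mul, neg_neg, neg_pos] at ha hb
  · exact mul_neg_of_pos_of_neg ha hb
  · exact mul_neg_of_neg_of_pos ha hb

lemma exists_seq_mem_and_lt {α : Type*} [LinearOrder α] {s : Finset α} {N : ℕ}
    (hs : s.card = N + 1) : ∃ k : ℕ → α, (∀ i, k i ∈ s) ∧ ∀ i < N, k i < k (i + 1) := by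
  refine ⟨fun i ↦ s.orderEmbOfFin hs (Fin.ofNat (N + 1) i),
    fun i ↦ s.orderEmbOfFin_mem hs _, fun i hi ↦ (s.orderEmbOfFin hs).strictMono ?_⟩
  rw [Fin.lt_def, Fin.val_ofNat, Fin.val_ofNat, Nat.mod_eq_of_lt (by omega),
    Nat.mod_eq_of_lt (by omega)]
  exact Nat.lt_succ_self i

lemma exists_finset_low_zeros (hRH : RiemannHypothesis) :
    ∃ Z : Finset ℂ, Z.card ≤ 460000 ∧ ∀ ρ : ℂ, xi ρ = 0 → |ρ.im| ≤ 50000 → ρ ∈ Z := by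
  classical
  have hmem {ρ : ℂ} := mem_zerosInDisc (R := 50001) (ρ := ρ) differentiable_xi xi_zero_ne_zero
  refine ⟨(zerosInDisc xi 50001).filter (|·.im| ≤ 50000), ?_, fun ρ hρ him ↦ ?_⟩
  · have h := card_le_of_xi_eq_zero hRH (G := 50000) (by norm_num)
      (t := (zerosInDisc xi 50001).filter (|·.im| ≤ 50000)) fun ρ hρ ↦
        ⟨(hmem.mp (Finset.mem_filter.mp hρ).1).1, (Finset.mem_filter.mp hρ).2⟩
    have : ((460000 : ℕ) : ℝ) = 2 * 50000 * 4.6 := by norm_num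
    rw [← Nat.cast_le (α := ℝ), this]
    exact h.trans (by gcongr; exact xiLogDeriv_50000_le)
  · refine Finset.mem_filter.mpr ⟨hmem.mpr ⟨hρ, ?_⟩, him⟩
    have h := Complex.norm_le_abs_re_add_abs_im ρ
    rw [re_eq_half_of_xi_eq_zero hRH hρ, abs_of_pos one_half_pos] at h
    linarith

lemma norm_exp_I_mul_sub_one_le (u : ℝ) (n : ℤ) :
    ‖Complex.exp (Complex.I * u) - 1‖ ≤ 2 * π * |u / (2 * π) - n| := by
  have hπ : (π : ℂ) ≠ 0 := by exact_mod_cast pi_ne_zero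
  have hperiod : Complex.exp (Complex.I * u) =
      Complex.exp (Complex.I * ((2 * π * (u / (2 * π) - n) : ℝ) : ℂ)) := by
    rw [← Complex.exp_periodic.int_mul n (Complex.I * ((2 * π * (u / (2 * π) - n) : ℝ) : ℂ))]
    congr 1
    push_cast
    field
  rw [hperiod]
  refine norm_exp_I_mul_ofReal_sub_one_le.trans_eq ?_
  rw [norm_eq_abs, abs_mul, abs_of_pos two_pi_pos]

lemma zerosAligned_exp {G ε δ u : ℝ} (hδ : 2 * π * ε ≤ δ)
    (h : ∀ ρ : ℂ, xi ρ = 0 → |ρ.im| ≤ G → ∃ n : ℤ, |u * ρ.im / (2 * π) - n| ≤ ε) :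
    ZerosAligned G δ (exp u) := by
  intro ρ hρ him
  obtain ⟨n, hn⟩ := h ρ hρ him
  have hcpow : ((exp u : ℝ) : ℂ) ^ (ρ.im * Complex.I) =
      Complex.exp (Complex.I * ((u * ρ.im : ℝ) : ℂ)) := by
    rw [Complex.cpow_def_of_ne_zero (by exact_mod_cast (exp_pos u).ne'),
      ← Complex.ofReal_log (exp_pos u).le, log_exp]
    push_cast
    ring_nf
  calc ‖((exp u : ℝ) : ℂ) ^ (ρ.im * Complex.I) - 1‖
    _ ≤ 2 * π * |u * ρ.im / (2 * π) - n| := hcpow ▸ norm_exp_I_mul_sub_one_le _ n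
    _ ≤ 2 * π * ε := by gcongr
    _ ≤ δ := hδ

lemma pow_mul_le_exp_exp {n : ℕ} (hn : n ≤ 460000) :
    (10 ^ 5 : ℝ) ^ n * 10 ^ 8 < exp (exp 16.7) := by
  have hexp (n : ℕ) : (2.7 : ℝ) ^ n ≤ exp n := by
    rw [← exp_one_pow]
    gcongr
    linarith [exp_one_gt_d9]
  have hexp_twelve : (10 ^ 5 : ℝ) ≤ exp 12 := le_trans (by norm_num) (hexp 12)
  have hexp_sixteen : 7000000 ≤ exp 16.7 :=
    (by norm_num : (7000000 : ℝ) ≤ 2.7 ^ 16).trans ((hexp 16).trans (exp_le_exp.mpr (by norm_num)))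
  have hn' : (n : ℝ) ≤ 460000 := by exact_mod_cast hn
  calc (10 ^ 5 : ℝ) ^ n * 10 ^ 8 ≤ exp 12 ^ n * exp 12 ^ 2 := by
        gcongr
        nlinarith
    _ = exp (n * 12 + 24) := by
        rw [← exp_nat_mul, ← exp_nat_mul, ← exp_add]
        norm_num
    _ < exp (exp 16.7) := exp_lt_exp.mpr (by linarith)

theorem exists_finset_zerosAligned (hRH : RiemannHypothesis) (n : ℕ) :
    ∃ K : Finset ℕ, K.card = n ∧ ∀ k ∈ K, 1 ≤ k ∧ k * 10 ^ 8 < n * exp (exp 16.7) ∧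
      ZerosAligned 50000 0.0001 (exp (k * 10 ^ 8)) := by
  obtain ⟨Z, hZ, hlow⟩ := exists_finset_low_zeros hRH
  obtain ⟨K, hK, hnear⟩ := exists_finset_multiples_near_int (q := 10 ^ 5) (by norm_num) n
    fun ρ : Z ↦ 10 ^ 8 * (ρ : ℂ).im / (2 * π)
  refine ⟨K, hK, fun k hk ↦ ?_⟩
  obtain ⟨hone, hle, hint⟩ := hnear k hk
  refine ⟨hone, ?_, zerosAligned_exp (ε := 1 / 10 ^ 5) (by linarith [pi_lt_d2])
    fun ρ hρ him ↦ ?_⟩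
  · have hn : (0 : ℝ) < n := by exact_mod_cast hK ▸ Finset.card_pos.mpr ⟨k, hk⟩
    rw [Fintype.card_coe] at hle
    calc (k : ℝ) * 10 ^ 8 ≤ ((10 ^ 5) ^ Z.card * n : ℝ) * 10 ^ 8 := by
          gcongr
          exact_mod_cast hle
      _ = n * ((10 ^ 5 : ℝ) ^ Z.card * 10 ^ 8) := by ring
      _ < n * exp (exp 16.7) := by
          gcongr
          exact pow_mul_le_exp_exp hZ
  · obtain ⟨m, hm⟩ := hint ⟨ρ, hlow ρ hρ him⟩
    refine ⟨m, ?_⟩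
    rw [mul_assoc, mul_div_assoc]
    exact_mod_cast hm

/-- The range `[x / 4, x]`, `x = exp (10 ^ 8 * k)`, in which `π - Li` is given a prescribed
sign. -/
def window (k : ℕ) : Set ℝ := Icc (exp (k * 10 ^ 8) / 4) (exp (k * 10 ^ 8))

lemma two_lt_of_mem_window {k : ℕ} (hk : 1 ≤ k) {t : ℝ} (ht : t ∈ window k) : 2 < t := by
  have hk' : (1 : ℝ) ≤ k := by exact_mod_cast hk
  have hexp := add_one_le_exp ((k : ℝ) * 10 ^ 8)
  refine lt_of_lt_of_le ?_ ht.1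
  rw [lt_div_iff₀ four_pos]
  linarith

lemma lt_of_mem_window {k l : ℕ} (hkl : k < l) {s t : ℝ} (hs : s ∈ window k)
    (ht : t ∈ window l) : s < t := by
  have hkl' : (k : ℝ) + 1 ≤ l := by exact_mod_cast hkl
  have hfour : 4 < exp (10 ^ 8) := by linarith [add_one_le_exp ((10 : ℝ) ^ 8)]
  calc s ≤ exp (k * 10 ^ 8) := hs.2
    _ < exp (k * 10 ^ 8) * exp (10 ^ 8) / 4 := by
      rw [lt_div_iff₀ four_pos]
      gcongr
    _ ≤ exp (l * 10 ^ 8) / 4 := by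
      rw [← exp_add]
      gcongr
      linarith
    _ ≤ t := ht.1

theorem exists_mem_window_sign (hRH : RiemannHypothesis) {k : ℕ} (hk : 1 ≤ k)
    (hal : ZerosAligned 50000 0.0001 (exp (k * 10 ^ 8))) (i : ℕ) :
    ∃ t ∈ window k, 0 < (-1) ^ i * (primePi t - Li t) := by
  unfold window
  have hk' : (1 : ℝ) ≤ k := by exact_mod_cast hk
  have hx : exp 2000000 ≤ exp (k * 10 ^ 8) := exp_le_exp.mpr (by linarith)
  rcases i.even_or_odd with hi | hi
  · simpa only [hi.neg_one_pow, one_mul] using exists_primePi_sub_Li_pos hRH hx hal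
  · simpa only [hi.neg_one_pow, neg_mul, one_mul, neg_pos] using exists_primePi_sub_Li_neg hRH hx

end SignChanges

end SchlagePuchta

/-- (Schlage-Puchta) Assuming the Riemann Hypothesis, for every `T > 2` the number of sign
changes of `π(x) − Li(x)` on `(2, T)` exceeds `log(T)/e^{e^{16.7}} − 1`. -/
theorem schlage_puchta_sign_changes (hRH : RiemannHypothesis) :
    ∀ T : ℝ, 2 < T → ∀ N : ℕ, (N : ℝ) ≤ Real.log T / Real.exp (Real.exp 16.7) - 1 →
      ∃ x : ℕ → ℝ,
        (∀ i ≤ N, 2 < x i ∧ x i < T) ∧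
        (∀ i < N, x i < x (i + 1)) ∧
        (∀ i < N,
          ((primePi (x i) : ℝ) - Li (x i)) * ((primePi (x (i + 1)) : ℝ) - Li (x (i + 1))) < 0) := by
  intro T hT N hN
  have hlogT : ((N + 1 : ℕ) : ℝ) * exp (exp 16.7) ≤ log T := by
    rw [← le_div_iff₀ (exp_pos _)]
    push_cast
    linarith
  obtain ⟨K, hcard, hK⟩ := SchlagePuchta.exists_finset_zerosAligned hRH (N + 1)
  obtain ⟨k, hk_mem, hk_lt⟩ := SchlagePuchta.exists_seq_mem_and_lt hcard
  choose hk_one hk_le hk_aligned using fun i ↦ hK (k i) (hk_mem i)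
  choose x hx_mem hx_sign using fun i ↦
    SchlagePuchta.exists_mem_window_sign hRH (hk_one i) (hk_aligned i) i
  refine ⟨x, fun i _ ↦ ⟨SchlagePuchta.two_lt_of_mem_window (hk_one i) (hx_mem i), ?_⟩,
    fun i hi ↦ SchlagePuchta.lt_of_mem_window (hk_lt i hi) (hx_mem i) (hx_mem (i + 1)),
    fun i _ ↦ SchlagePuchta.mul_neg_of_neg_one_pow_mul_pos (hx_sign i) (hx_sign (i + 1))⟩
  exact (hx_mem i).2.trans_lt
    ((lt_log_iff_exp_lt (by linarith)).mp ((hk_le i).trans_le hlogT))
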